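/- arXiv:2507.13029 — 2 statements merged into one kernel-verified Lean document; each statement's English description precedes it below -/
import Mathlib

section
/- There exists ε₀ > 0 such that for every ε ∈ (0, ε₀), every integer q ≥ 1, and every η₁ > 0, there exist η ∈ (0, η₁) and a bijection g : ℝ² → ℝ² such that: (i) g and g⁻¹ are C^∞ and g preserves 2-dimensional Lebesgue measure; (ii) g equals the identity outside a compact subset of the open punctured disk {x ∈ ℝ² : 0 < ‖x‖ < 1}; (iii) g commutes with the rotation of ℝ² by angle 2π/q about the origin; (iv) ‖g(x) − x‖ ≤ ε and ‖g⁻¹(x) − x‖ ≤ ε for all x ∈ ℝ²; and (v) for every y ∈ [−1+ε, 1−ε], (1/2)·Leb{ y' ∈ [−1, 1] : for every 1-Lipschitz f : ℝ² → ℝ, ∫ f d(g_*μ_y) − ∫ f d(g_*μ_{y'}) ≤ 3η } ≤ exp(−η^{−2+ε}). (Corollary 4.2, disk case.) -/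
open MeasureTheory Metric
open scoped ENNReal

/-- The measure-preserving polar-type parametrization of the unit disk by the cylinder:
`π_D(θ, y) = √((1+y)/2)·(cos(2πθ), sin(2πθ))`. -/
noncomputable def piD (θ y : ℝ) : EuclideanSpace ℝ (Fin 2) :=
  (EuclideanSpace.equiv (Fin 2) ℝ).symm
    ![Real.sqrt ((1 + y) / 2) * Real.cos (2 * Real.pi * θ),
      Real.sqrt ((1 + y) / 2) * Real.sin (2 * Real.pi * θ)]

/-- The uniform probability measure `μ_y` on the circle of radius `√((1+y)/2)` centered at the
origin of the plane: the pushforward of Lebesgue measure on `[0,1]` under `θ ↦ π_D(θ,y)`. -/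
noncomputable def diskCircleMeasure (y : ℝ) : Measure (EuclideanSpace ℝ (Fin 2)) :=
  Measure.map (fun θ => piD θ y) (volume.restrict (Set.Icc (0 : ℝ) 1))

/-- The rotation of the plane by angle `2πα` about the origin. -/
noncomputable def rotO (α : ℝ) (x : EuclideanSpace ℝ (Fin 2)) : EuclideanSpace ℝ (Fin 2) :=
  (EuclideanSpace.equiv (Fin 2) ℝ).symm
    ![Real.cos (2 * Real.pi * α) * x 0 - Real.sin (2 * Real.pi * α) * x 1,
      Real.sin (2 * Real.pi * α) * x 0 + Real.cos (2 * Real.pi * α) * x 1]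


/-- A smooth version of the step function `x ↦ v ⌊x / w⌋`. -/
lemma smooth_step (w ρ : ℝ) (hw : 0 < w) (hρ : 0 < ρ) (hρ' : ρ < 1 / 2) (v : ℤ → ℝ) :
    ∃ φ : ℝ → ℝ, ContDiff ℝ (⊤ : ℕ∞) φ ∧
      (∀ x, ∃ c : ℝ, 0 ≤ c ∧ c ≤ 1 ∧ φ x = v ⌊x / w⌋ * c) ∧
      (∀ n : ℤ, ∀ x, w * (n + ρ) ≤ x → x ≤ w * (n + 1 - ρ) → φ x = v n) ∧
      (∀ T : ℤ, (∀ n, v (n + T) = v n) → ∀ x, φ (x + w * T) = φ x) := by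
  let χ : ContDiffBump (1 / 2 : ℝ) :=
    { rIn := 1 / 2 - ρ, rOut := 1 / 2 - ρ / 2, rIn_pos := by linarith, rIn_lt_rOut := by linarith }
  refine ⟨fun x => v ⌊x / w⌋ * χ (Int.fract (x / w)), ?_, ?_, ?_, ?_⟩
  · rw [contDiff_iff_contDiffAt]
    intro x
    by_cases hx : 0 < Int.fract (x / w)
    · have h : (fun x => v ⌊x / w⌋ * χ (Int.fract (x / w))) =ᶠ[nhds x]
          fun y => v ⌊x / w⌋ * χ (y / w - ⌊x / w⌋) := by
        have h1 : ∀ᶠ y in nhds x, (⌊x / w⌋ : ℝ) < y / w ∧ y / w < ⌊x / w⌋ + 1 := by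
          have hc : Continuous fun y : ℝ => y / w := by fun_prop
          have e := Int.self_sub_floor (x / w)
          refine (hc.tendsto x).eventually (Ioo_mem_nhds ?_ ?_)
          · linarith
          · linarith [Int.fract_lt_one (x / w)]
        filter_upwards [h1] with y hy
        have : ⌊y / w⌋ = ⌊x / w⌋ := by
          rw [Int.floor_eq_iff]; exact ⟨hy.1.le, hy.2⟩
        rw [Int.fract, this]
      refine ContDiffAt.congr_of_eventuallyEq ?_ h
      refine contDiffAt_const.mul ?_
      exact (χ.contDiff.comp (by fun_prop)).contDiffAt
    · have h : (fun x => v ⌊x / w⌋ * χ (Int.fract (x / w))) =ᶠ[nhds x] fun _ => 0 := by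
        have h0 : Int.fract (x / w) = 0 := le_antisymm (not_lt.mp hx) (Int.fract_nonneg _)
        have e := Int.self_sub_floor (x / w)
        have h1 : ∀ᶠ y in nhds x,
            (⌊x / w⌋ : ℝ) - ρ / 2 < y / w ∧ y / w < ⌊x / w⌋ + ρ / 2 := by
          have hc : Continuous fun y : ℝ => y / w := by fun_prop
          refine (hc.tendsto x).eventually (Ioo_mem_nhds ?_ ?_) <;> linarith
        filter_upwards [h1] with y hy
        have : χ (Int.fract (y / w)) = 0 := by
          apply χ.zero_of_le_dist
          change 1 / 2 - ρ / 2 ≤ _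
          rw [Real.dist_eq]
          by_cases hlt : y / w < ⌊x / w⌋
          · have hf : ⌊y / w⌋ = ⌊x / w⌋ - 1 := by
              rw [Int.floor_eq_iff]; push_cast; constructor <;> linarith
            rw [Int.fract, hf]; push_cast
            refine le_trans ?_ (le_abs_self _); linarith
          · have hf : ⌊y / w⌋ = ⌊x / w⌋ := by
              rw [Int.floor_eq_iff]; constructor <;> linarith
            rw [Int.fract, hf]
            refine le_trans ?_ (neg_le_abs _); linarith
        rw [this, mul_zero]
      exact contDiffAt_const.congr_of_eventuallyEq h
  · intro x
    exact ⟨_, χ.nonneg, χ.le_one, rfl⟩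
  · intro n x h1 h2
    have a1 : n + ρ ≤ x / w := by rw [le_div_iff₀ hw]; linarith
    have a2 : x / w ≤ n + 1 - ρ := by rw [div_le_iff₀ hw]; linarith
    have : ⌊x / w⌋ = n := by
      rw [Int.floor_eq_iff]; constructor <;> linarith
    have e : χ (Int.fract (x / w)) = 1 := by
      apply χ.one_of_mem_closedBall
      rw [mem_closedBall, Real.dist_eq, Int.fract, this, abs_le]
      change -(1 / 2 - ρ) ≤ _ ∧ _ ≤ 1 / 2 - ρ
      constructor <;> linarith
    simp only [this, e, mul_one]
  · intro T hT x
    have : (x + w * T) / w = x / w + T := by field_simp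
    simp only [this, Int.floor_add_intCast, Int.fract_add_intCast, hT]


lemma piD_zero (θ y : ℝ) : piD θ y 0 = Real.sqrt ((1 + y) / 2) * Real.cos (2 * Real.pi * θ) := by
  simp [piD]

lemma piD_one (θ y : ℝ) : piD θ y 1 = Real.sqrt ((1 + y) / 2) * Real.sin (2 * Real.pi * θ) := by
  simp [piD]

lemma norm_sq_two (x : EuclideanSpace ℝ (Fin 2)) : ‖x‖ ^ 2 = x 0 ^ 2 + x 1 ^ 2 := by
  rw [EuclideanSpace.norm_sq_eq]; simp

lemma piD_norm (θ y : ℝ) : ‖piD θ y‖ = Real.sqrt ((1 + y) / 2) := by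
  rw [← sq_eq_sq₀ (norm_nonneg _) (Real.sqrt_nonneg _), norm_sq_two, piD_zero, piD_one]
  linear_combination (Real.sqrt ((1 + y) / 2))^2 * Real.sin_sq_add_cos_sq (2 * Real.pi * θ)

lemma piD_norm_sq (θ y : ℝ) (hy : -1 ≤ y) : ‖piD θ y‖ ^ 2 = (1 + y) / 2 := by
  rw [piD_norm, Real.sq_sqrt (by linarith)]

lemma piD_dist_sq (θ y θ' y' : ℝ) : ‖piD θ y - piD θ' y'‖ ^ 2 =
    (Real.sqrt ((1 + y) / 2) - Real.sqrt ((1 + y') / 2)) ^ 2 +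
      4 * Real.sqrt ((1 + y) / 2) * Real.sqrt ((1 + y') / 2) *
        Real.sin (Real.pi * (θ - θ')) ^ 2 := by
  rw [norm_sq_two]
  simp only [PiLp.sub_apply, piD_zero, piD_one]
  have h : Real.cos (2 * Real.pi * θ) * Real.cos (2 * Real.pi * θ') +
      Real.sin (2 * Real.pi * θ) * Real.sin (2 * Real.pi * θ') =
      1 - 2 * Real.sin (Real.pi * (θ - θ')) ^ 2 := by
    rw [← Real.cos_sub, ← mul_sub, mul_assoc, Real.cos_two_mul]
    linarith [Real.sin_sq_add_cos_sq (Real.pi * (θ - θ'))]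
  linear_combination (Real.sqrt ((1 + y) / 2))^2 * Real.sin_sq_add_cos_sq (2 * Real.pi * θ)
    + (Real.sqrt ((1 + y') / 2))^2 * Real.sin_sq_add_cos_sq (2 * Real.pi * θ')
    - 2 * (Real.sqrt ((1 + y) / 2)) * (Real.sqrt ((1 + y') / 2)) * h

lemma piD_add_int (θ y : ℝ) (k : ℤ) : piD (θ + k) y = piD θ y := by
  have : 2 * Real.pi * (θ + k) = 2 * Real.pi * θ + k * (2 * Real.pi) := by ring
  simp only [piD, this, Real.cos_add_int_mul_two_pi, Real.sin_add_int_mul_two_pi]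

lemma piD_inj (θ y θ' y' : ℝ) (hy : -1 < y) (hy' : -1 ≤ y') (h : piD θ y = piD θ' y') :
    y = y' ∧ ∃ k : ℤ, θ = θ' + k := by
  have h1 := piD_norm_sq θ y hy.le
  have h2 := piD_norm_sq θ' y' hy'
  rw [h, h2] at h1
  have hyy : y = y' := by linarith
  subst hyy
  refine ⟨rfl, ?_⟩
  have hd := piD_dist_sq θ y θ' y
  have hs : 0 < Real.sqrt ((1 + y) / 2) := Real.sqrt_pos.mpr (by linarith)
  rw [h, sub_self, norm_zero, sub_self] at hd
  have : Real.sin (Real.pi * (θ - θ')) = 0 := by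
    by_contra hne
    have : 0 < Real.sin (Real.pi * (θ - θ')) ^ 2 := by positivity
    have : 0 < 4 * Real.sqrt ((1 + y) / 2) * Real.sqrt ((1 + y) / 2) *
        Real.sin (Real.pi * (θ - θ')) ^ 2 := by positivity
    linarith
  obtain ⟨n, hn⟩ := Real.sin_eq_zero_iff.mp this
  refine ⟨n, ?_⟩
  have : Real.pi * (θ - θ' - n) = 0 := by linarith
  have := (mul_eq_zero.mp this).resolve_left Real.pi_ne_zero
  linarith

lemma rotO_piD (α θ y : ℝ) : rotO α (piD θ y) = piD (θ + α) y := by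
  have : 2 * Real.pi * (θ + α) = 2 * Real.pi * θ + 2 * Real.pi * α := by ring
  ext i
  fin_cases i
  · simp only [rotO, piD_zero, piD_one, Fin.zero_eta, this, Real.cos_add]
    simp; ring
  · simp only [rotO, piD_zero, piD_one, Fin.mk_one, this, Real.sin_add]
    simp; ring

lemma exists_piD (x : EuclideanSpace ℝ (Fin 2)) : ∃ θ : ℝ, piD θ (2 * ‖x‖ ^ 2 - 1) = x := by
  refine ⟨Complex.arg ⟨x 0, x 1⟩ / (2 * Real.pi), ?_⟩
  have hs : Real.sqrt ((1 + (2 * ‖x‖ ^ 2 - 1)) / 2) = ‖x‖ := by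
    rw [show (1 + (2 * ‖x‖ ^ 2 - 1)) / 2 = ‖x‖ ^ 2 by ring, Real.sqrt_sq (norm_nonneg _)]
  have hn : ‖(⟨x 0, x 1⟩ : ℂ)‖ = ‖x‖ := by
    rw [← sq_eq_sq₀ (norm_nonneg _) (norm_nonneg _), norm_sq_two, Complex.sq_norm,
      Complex.normSq_mk]; ring
  have ha : 2 * Real.pi * (Complex.arg ⟨x 0, x 1⟩ / (2 * Real.pi)) = Complex.arg ⟨x 0, x 1⟩ := by
    field_simp
  ext i
  fin_cases i
  · simp only [Fin.zero_eta, piD_zero, hs, ha]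
    rw [← hn, Complex.norm_mul_cos_arg]
  · simp only [Fin.mk_one, piD_one, hs, ha]
    rw [← hn, Complex.norm_mul_sin_arg]

lemma piD_dist_ge_radial (θ y θ' y' : ℝ) (h1 : -1 ≤ y) (h2 : y ≤ 1) (h1' : -1 ≤ y') (h2' : y' ≤ 1) :
    |y - y'| / 4 ≤ ‖piD θ y - piD θ' y'‖ := by
  have ha := piD_norm_sq θ y h1
  have hb := piD_norm_sq θ' y' h1'
  have ht := abs_norm_sub_norm_le (piD θ y) (piD θ' y')
  have hA : ‖piD θ y‖ ≤ 1 := by rw [← sq_le_one_iff₀ (norm_nonneg _)]; linarith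
  have hB : ‖piD θ' y'‖ ≤ 1 := by rw [← sq_le_one_iff₀ (norm_nonneg _)]; linarith
  have e : |y - y'| = 2 * (|‖piD θ y‖ - ‖piD θ' y'‖| * (‖piD θ y‖ + ‖piD θ' y'‖)) := by
    rw [show y - y' = 2 * ((‖piD θ y‖ - ‖piD θ' y'‖) * (‖piD θ y‖ + ‖piD θ' y'‖)) by
      linear_combination 2 * hb - 2 * ha]
    rw [abs_mul, abs_mul, abs_of_nonneg (by positivity : 0 ≤ ‖piD θ y‖ + ‖piD θ' y'‖)]
    norm_num
  rw [e]
  nlinarith [abs_nonneg (‖piD θ y‖ - ‖piD θ' y'‖)]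

lemma piD_dist_ge_angular (θ y θ' y' r t : ℝ) (hr : 0 ≤ r) (ht : 0 ≤ t)
    (h1 : 2 * r ^ 2 - 1 ≤ y) (h1' : 2 * r ^ 2 - 1 ≤ y')
    (hk : ∀ k : ℤ, t ≤ |θ - θ' - k|) :
    4 * r * t ≤ ‖piD θ y - piD θ' y'‖ := by
  have s1 : r ≤ Real.sqrt ((1 + y) / 2) := Real.le_sqrt_of_sq_le (by linarith)
  have s2 : r ≤ Real.sqrt ((1 + y') / 2) := Real.le_sqrt_of_sq_le (by linarith)
  have h3 : 2 * t ≤ |Real.sin (Real.pi * (θ - θ'))| := by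
    set k := round (θ - θ') with hkdef
    have hk1 := hk k
    have hk2 : |θ - θ' - k| ≤ 1 / 2 := abs_sub_round _
    have : |Real.sin (Real.pi * (θ - θ'))| = |Real.sin (Real.pi * (θ - θ' - k))| := by
      rw [mul_sub Real.pi (θ - θ') k, mul_comm Real.pi (k : ℝ), Real.sin_sub_int_mul_pi, abs_mul]
      simp [abs_zpow]
    have hp := Real.pi_pos
    have e : |Real.pi * (θ - θ' - k)| = Real.pi * |θ - θ' - k| := by
      rw [abs_mul, abs_of_pos hp]
    rw [this, Real.abs_sin_eq_sin_abs_of_abs_le_pi (by rw [e]; nlinarith), e]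
    refine le_trans ?_ (Real.mul_le_sin (by positivity) (by nlinarith))
    have : 2 / Real.pi * (Real.pi * |θ - θ' - k|) = 2 * |θ - θ' - k| := by field_simp
    rw [this]; linarith
  rw [← sq_le_sq₀ (by positivity) (norm_nonneg _), piD_dist_sq]
  have h4 : (2 * t) ^ 2 ≤ Real.sin (Real.pi * (θ - θ')) ^ 2 := by
    rw [← sq_abs (Real.sin _)]; gcongr
  have h5 : r * r ≤ Real.sqrt ((1 + y) / 2) * Real.sqrt ((1 + y') / 2) := by gcongr
  nlinarith [mul_le_mul h5 h4 (by positivity) (by positivity),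
    sq_nonneg (Real.sqrt ((1 + y) / 2) - Real.sqrt ((1 + y') / 2))]

lemma piD_dist_le (θ y θ' y' δ s : ℝ) (h1 : -1 ≤ y) (h2 : y ≤ 1) (h1' : -1 ≤ y') (h2' : y' ≤ 1)
    (hs : |θ - θ'| ≤ s) (hδ : |y - y'| ≤ δ) :
    ‖piD θ y - piD θ' y'‖ ≤ Real.sqrt (δ / 2) + 2 * Real.pi * s := by
  have hs0 : 0 ≤ s := (abs_nonneg _).trans hs
  have hd0 : 0 ≤ δ := (abs_nonneg _).trans hδ
  set A := Real.sqrt ((1 + y) / 2) with hA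
  set B := Real.sqrt ((1 + y') / 2) with hB
  have A0 : 0 ≤ A := Real.sqrt_nonneg _
  have B0 : 0 ≤ B := Real.sqrt_nonneg _
  have A2 : A ^ 2 = (1 + y) / 2 := Real.sq_sqrt (by linarith)
  have B2 : B ^ 2 = (1 + y') / 2 := Real.sq_sqrt (by linarith)
  have A1 : A ≤ 1 := by rw [← sq_le_one_iff₀ A0]; linarith
  have B1 : B ≤ 1 := by rw [← sq_le_one_iff₀ B0]; linarith
  have D2 := Real.sq_sqrt (show 0 ≤ δ / 2 by linarith)
  have D0 := Real.sqrt_nonneg (δ / 2)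
  have hAB : (A - B) ^ 2 ≤ Real.sqrt (δ / 2) ^ 2 := by
    rw [D2]
    rcases abs_le.mp hδ with ⟨u1, u2⟩
    rcases le_total A B with h | h <;> nlinarith
  have hsin : Real.sin (Real.pi * (θ - θ')) ^ 2 ≤ (Real.pi * s) ^ 2 := by
    rw [← sq_abs (Real.sin _)]
    have : |Real.sin (Real.pi * (θ - θ'))| ≤ Real.pi * s := by
      refine Real.abs_sin_le_abs.trans ?_
      rw [abs_mul, abs_of_pos Real.pi_pos]
      exact mul_le_mul_of_nonneg_left hs Real.pi_pos.le
    gcongr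
  rw [← sq_le_sq₀ (norm_nonneg _) (by positivity), piD_dist_sq]
  have hAB1 : A * B ≤ 1 := by nlinarith
  have := mul_le_mul hAB1 hsin (by positivity) zero_le_one
  have h6 : 0 ≤ Real.sqrt (δ / 2) * (Real.pi * s) := by positivity
  nlinarith


/-- The Euclidean plane. -/
abbrev E2 := EuclideanSpace ℝ (Fin 2)

lemma det_E2 (A : E2 →L[ℝ] E2) (α β γ δ : ℝ) (h0 : ∀ v, A v 0 = α * v 0 + β * v 1)
    (h1 : ∀ v, A v 1 = γ * v 0 + δ * v 1) : A.det = α * δ - β * γ := by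
  have : A.det = LinearMap.det (A : E2 →ₗ[ℝ] E2) := rfl
  rw [this, ← LinearMap.det_toMatrix (EuclideanSpace.basisFun (Fin 2) ℝ).toBasis,
    Matrix.det_fin_two]
  simp [LinearMap.toMatrix_apply, h0, h1]

lemma hasFDeriv_E2 (F : E2 → E2) (p : E2) (α β γ δ : ℝ) (L0 L1 : E2 →L[ℝ] ℝ)
    (h0 : HasFDerivAt (fun p => F p 0) L0 p) (h1 : HasFDerivAt (fun p => F p 1) L1 p)
    (e0 : ∀ v, L0 v = α * v 0 + β * v 1) (e1 : ∀ v, L1 v = γ * v 0 + δ * v 1) :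
    ∃ D : E2 →L[ℝ] E2, HasFDerivAt F D p ∧ D.det = α * δ - β * γ := by
  have hd : DifferentiableAt ℝ F p := by
    rw [differentiableAt_euclidean]
    intro i
    fin_cases i
    · exact h0.differentiableAt
    · exact h1.differentiableAt
  have hF := hd.hasFDerivAt
  refine ⟨fderiv ℝ F p, hF, ?_⟩
  have hc : ∀ i, HasFDerivAt (fun p => F p i)
      ((EuclideanSpace.proj i : E2 →L[ℝ] ℝ).comp (fderiv ℝ F p)) p := fun i =>
    (EuclideanSpace.proj i : E2 →L[ℝ] ℝ).hasFDerivAt.comp p hF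
  apply det_E2
  · intro v
    rw [← e0, ← (hc 0).unique h0]; rfl
  · intro v
    rw [← e1, ← (hc 1).unique h1]; rfl

/-- `piD` as a map of the plane. -/
noncomputable def PP (p : E2) : E2 := piD (p 0) (p 1)

/-- Vertical shear. -/
noncomputable def shV (b : ℝ → ℝ) (p : E2) : E2 := !₂[p 0, p 1 + b (p 0)]

/-- Horizontal shear. -/
noncomputable def shH (a : ℝ → ℝ) (p : E2) : E2 := !₂[p 0 + a (p 1), p 1]

lemma hasFDerivAt_coord (i : Fin 2) (p : E2) :
    HasFDerivAt (fun p : E2 => p i) (EuclideanSpace.proj i : E2 →L[ℝ] ℝ) p :=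
  (EuclideanSpace.proj i : E2 →L[ℝ] ℝ).hasFDerivAt

lemma shV_deriv (b : ℝ → ℝ) (hb : Differentiable ℝ b) (p : E2) :
    ∃ D : E2 →L[ℝ] E2, HasFDerivAt (shV b) D p ∧ D.det = 1 := by
  have := hasFDeriv_E2 (shV b) p 1 0 (deriv b (p 0)) 1 _ _ (hasFDerivAt_coord 0 p)
    ((hasFDerivAt_coord 1 p).add
      ((hb (p 0)).hasDerivAt.comp_hasFDerivAt p (hasFDerivAt_coord 0 p)))
    (by intro v; simp) (by intro v; simp; ring)
  simpa using this

lemma shH_deriv (a : ℝ → ℝ) (ha : Differentiable ℝ a) (p : E2) :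
    ∃ D : E2 →L[ℝ] E2, HasFDerivAt (shH a) D p ∧ D.det = 1 := by
  have := hasFDeriv_E2 (shH a) p 1 (deriv a (p 1)) 0 1 _ _ ((hasFDerivAt_coord 0 p).add
      ((ha (p 1)).hasDerivAt.comp_hasFDerivAt p (hasFDerivAt_coord 1 p))) (hasFDerivAt_coord 1 p)
    (by intro v; simp) (by intro v; simp)
  simpa using this

lemma PP_deriv (p : E2) (hp : -1 < p 1) :
    ∃ D : E2 →L[ℝ] E2, HasFDerivAt PP D p ∧ D.det = - (Real.pi / 2) := by
  set R := Real.sqrt ((1 + p 1) / 2) with hR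
  have hpos : 0 < (1 + p 1) / 2 := by linarith
  have hR0 : 0 < R := Real.sqrt_pos.mpr hpos
  have hs : HasDerivAt (fun y : ℝ => Real.sqrt ((1 + y) / 2)) (1 / (4 * R)) (p 1) := by
    have h1 : HasDerivAt (fun y : ℝ => (1 + y) / 2) (1 / 2) (p 1) :=
      ((hasDerivAt_id (p 1)).const_add 1).div_const 2
    have := h1.sqrt hpos.ne'
    convert this using 1
    rw [← hR]; field_simp; norm_num
  have hm : HasDerivAt (fun t : ℝ => 2 * Real.pi * t) (2 * Real.pi) (p 0) := by
    simpa using (hasDerivAt_id (p 0)).const_mul (2 * Real.pi)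
  have hs' := hs.comp_hasFDerivAt p (hasFDerivAt_coord 1 p)
  have hc' := hm.cos.comp_hasFDerivAt p (hasFDerivAt_coord 0 p)
  have hn' := hm.sin.comp_hasFDerivAt p (hasFDerivAt_coord 0 p)
  have e0 : (fun p : E2 => PP p 0) = ((fun y : ℝ => Real.sqrt ((1 + y) / 2)) ∘ fun p : E2 => p 1) *
      ((fun t : ℝ => Real.cos (2 * Real.pi * t)) ∘ fun p : E2 => p 0) := by
    ext p; simp [PP, piD_zero]
  have e1 : (fun p : E2 => PP p 1) = ((fun y : ℝ => Real.sqrt ((1 + y) / 2)) ∘ fun p : E2 => p 1) *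
      ((fun t : ℝ => Real.sin (2 * Real.pi * t)) ∘ fun p : E2 => p 0) := by
    ext p; simp [PP, piD_one]
  obtain ⟨D, hD, hdet⟩ := hasFDeriv_E2 PP p
    (R * (-Real.sin (2 * Real.pi * p 0) * (2 * Real.pi)))
    (Real.cos (2 * Real.pi * p 0) * (1 / (4 * R)))
    (R * (Real.cos (2 * Real.pi * p 0) * (2 * Real.pi)))
    (Real.sin (2 * Real.pi * p 0) * (1 / (4 * R))) _ _
    (e0 ▸ hs'.mul hc') (e1 ▸ hs'.mul hn')
    (by intro v; simp [hR]; ring) (by intro v; simp [hR]; ring)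
  refine ⟨D, hD, ?_⟩
  rw [hdet]
  have := Real.sin_sq_add_cos_sq (2 * Real.pi * p 0)
  have hRR : R * (1 / (4 * R)) = 1 / 4 := by field_simp
  linear_combination (-(Real.pi / 2)) * this - 2 * Real.pi *
    (Real.sin (2 * Real.pi * p 0) ^ 2 + Real.cos (2 * Real.pi * p 0) ^ 2) * hRR


/-- The lifted map: horizontal shear conjugated by a vertical shear. -/
noncomputable def GG (a b : ℝ → ℝ) (p : E2) : E2 := shV (fun t => -b t) (shH a (shV b p))

lemma GG_zero (a b : ℝ → ℝ) (p : E2) : GG a b p 0 = p 0 + a (p 1 + b (p 0)) := by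
  simp [GG, shV, shH]

lemma GG_one (a b : ℝ → ℝ) (p : E2) :
    GG a b p 1 = p 1 + b (p 0) - b (p 0 + a (p 1 + b (p 0))) := by
  simp [GG, shV, shH]; ring

/-- Admissible shear profiles. -/
structure GoodAB (a b : ℝ → ℝ) (δ : ℝ) : Prop where
  pos : 0 < δ
  smooth_a : ContDiff ℝ (⊤ : ℕ∞) a
  smooth_b : ContDiff ℝ (⊤ : ℕ∞) b
  b_nonneg : ∀ t, 0 ≤ b t
  b_le : ∀ t, b t ≤ δ
  per : ∀ t, b (t + 1) = b t
  a_low : ∀ z, z ≤ -1 + 2 * δ → a z = 0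
  a_high : ∀ z, 1 - δ ≤ z → a z = 0

lemma GoodAB.neg {a b : ℝ → ℝ} {δ : ℝ} (h : GoodAB a b δ) : GoodAB (fun z => -a z) b δ :=
  { pos := h.pos, smooth_a := h.smooth_a.neg, smooth_b := h.smooth_b, b_nonneg := h.b_nonneg,
    b_le := h.b_le, per := h.per, a_low := fun z hz => by simp [h.a_low z hz],
    a_high := fun z hz => by simp [h.a_high z hz] }

lemma ext_E2 {x y : E2} (h0 : x 0 = y 0) (h1 : x 1 = y 1) : x = y := by
  ext i; fin_cases i
  · exact h0
  · exact h1

lemma GG_id {a b : ℝ → ℝ} {p : E2} (h : a (p 1 + b (p 0)) = 0) : GG a b p = p := by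
  apply ext_E2
  · rw [GG_zero, h, add_zero]
  · rw [GG_one, h, add_zero]; ring

lemma GG_neg (a b : ℝ → ℝ) (p : E2) : GG (fun z => -a z) b (GG a b p) = p := by
  have e : GG a b p 1 + b (GG a b p 0) = p 1 + b (p 0) := by
    rw [GG_one, GG_zero]; ring
  apply ext_E2
  · rw [GG_zero, e, GG_zero]; ring
  · rw [GG_one, e, GG_zero]
    rw [show p 0 + a (p 1 + b (p 0)) + -a (p 1 + b (p 0)) = p 0 by ring]; ring

lemma GG_gt {a b : ℝ → ℝ} {δ : ℝ} (h : GoodAB a b δ) {p : E2} (ha : a (p 1 + b (p 0)) ≠ 0) :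
    -1 + δ ≤ GG a b p 1 ∧ GG a b p 1 ≤ 1 - δ ∧ -1 + δ ≤ p 1 ∧ p 1 ≤ 1 - δ := by
  have h1 : -1 + 2 * δ < p 1 + b (p 0) := by
    by_contra hc; exact ha (h.a_low _ (not_lt.mp hc))
  have h2 : p 1 + b (p 0) < 1 - δ := by
    by_contra hc; exact ha (h.a_high _ (not_lt.mp hc))
  have := h.b_nonneg (p 0)
  have := h.b_le (p 0)
  have := h.b_nonneg (p 0 + a (p 1 + b (p 0)))
  have := h.b_le (p 0 + a (p 1 + b (p 0)))
  rw [GG_one]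
  refine ⟨?_, ?_, ?_, ?_⟩ <;> linarith

lemma GG_ge {a b : ℝ → ℝ} {δ : ℝ} (h : GoodAB a b δ) {p : E2} (hp : -1 ≤ p 1) :
    -1 ≤ GG a b p 1 := by
  by_cases ha : a (p 1 + b (p 0)) = 0
  · rw [GG_id ha]; exact hp
  · linarith [(GG_gt h ha).1, h.pos]

lemma GG_gt' {a b : ℝ → ℝ} {δ : ℝ} (h : GoodAB a b δ) {p : E2} (hp : -1 < p 1) :
    -1 < GG a b p 1 := by
  by_cases ha : a (p 1 + b (p 0)) = 0
  · rw [GG_id ha]; exact hp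
  · linarith [(GG_gt h ha).1, h.pos]

/-- A section of `PP`. -/
noncomputable def LL (x : E2) : E2 := !₂[Classical.choose (exists_piD x), 2 * ‖x‖ ^ 2 - 1]

lemma LL_one (x : E2) : LL x 1 = 2 * ‖x‖ ^ 2 - 1 := by simp [LL]

lemma LL_ge (x : E2) : -1 ≤ LL x 1 := by rw [LL_one]; nlinarith [sq_nonneg ‖x‖]

lemma PP_LL (x : E2) : PP (LL x) = x := by
  have := Classical.choose_spec (exists_piD x)
  simpa [PP, LL] using this

/-- The plane map induced by `GG`. -/
noncomputable def gm (a b : ℝ → ℝ) (x : E2) : E2 := PP (GG a b (LL x))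

lemma per_int {b : ℝ → ℝ} (hb : ∀ t, b (t + 1) = b t) (t : ℝ) (k : ℤ) : b (t + k) = b t := by
  have := (Function.Periodic.int_mul hb k) t
  simpa using this

lemma gm_PP {a b : ℝ → ℝ} {δ : ℝ} (h : GoodAB a b δ) (p : E2) (hp : -1 ≤ p 1) :
    gm a b (PP p) = PP (GG a b p) := by
  rcases hp.eq_or_lt with hp | hp
  · have e0 : PP p = 0 := by
      rw [← norm_eq_zero, PP, piD_norm, ← hp]; simp
    have e1 : GG a b p = p := by
      apply GG_id
      apply h.a_low
      linarith [h.b_le (p 0), h.pos]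
    have e2 : GG a b (LL 0) = LL 0 := by
      apply GG_id
      apply h.a_low
      rw [LL_one]; simp
      linarith [h.b_le (LL 0 0), h.pos]
    rw [e0, gm, e2, PP_LL, e1, e0]
  · have hk := PP_LL (PP p)
    obtain ⟨h1, k, hk⟩ := piD_inj _ _ _ _ hp (LL_ge _) hk.symm
    set p' := LL (PP p)
    have e : PP (GG a b p) = PP (GG a b p') := by
      have e1 : b (p 0) = b (p' 0) := by rw [hk, per_int h.per]
      have e0 : GG a b p 0 = GG a b p' 0 + k := by
        rw [GG_zero, GG_zero, h1, e1, hk]; ring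
      have e2 : GG a b p 1 = GG a b p' 1 := by
        rw [GG_one, GG_one, ← GG_zero, ← GG_zero, e0, per_int h.per, h1, e1]
      rw [PP, PP, e0, e2, piD_add_int]
    rw [e]; rfl

lemma gm_neg {a b : ℝ → ℝ} {δ : ℝ} (h : GoodAB a b δ) (x : E2) :
    gm (fun z => -a z) b (gm a b x) = x := by
  rw [gm.eq_def a b x, gm_PP h.neg _ (GG_ge h (LL_ge x)), GG_neg, PP_LL]

lemma gm_id {a b : ℝ → ℝ} {δ : ℝ} (h : GoodAB a b δ) (x : E2)
    (hx : LL x 1 < -1 + δ ∨ 1 - δ < LL x 1) : gm a b x = x := by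
  rw [gm]
  by_cases ha : a (LL x 1 + b (LL x 0)) = 0
  · rw [GG_id ha, PP_LL]
  · have := GG_gt h ha
    rcases hx with hx | hx <;> linarith

lemma PP_contDiffAt (p : E2) (hp : -1 < p 1) : ContDiffAt ℝ (⊤ : ℕ∞) PP p := by
  have hs : ContDiffAt ℝ (⊤ : ℕ∞) (fun p : E2 => Real.sqrt ((1 + p 1) / 2)) p := by
    apply ContDiffAt.sqrt
    · fun_prop
    · linarith
  rw [contDiffAt_euclidean]
  intro i
  fin_cases i
  · simp only [PP, Fin.zero_eta, piD_zero]
    exact hs.mul (Real.contDiff_cos.comp (by fun_prop)).contDiffAt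
  · simp only [PP, Fin.mk_one, piD_one]
    exact hs.mul (Real.contDiff_sin.comp (by fun_prop)).contDiffAt

lemma GG_contDiff {a b : ℝ → ℝ} {δ : ℝ} (h : GoodAB a b δ) : ContDiff ℝ (⊤ : ℕ∞) (GG a b) := by
  have ha := h.smooth_a
  have hb := h.smooth_b
  have hc : ContDiff ℝ (⊤ : ℕ∞) (fun p : E2 => p 1 + b (p 0)) := by fun_prop
  have hd : ContDiff ℝ (⊤ : ℕ∞) (fun p : E2 => p 0 + a (p 1 + b (p 0))) := by fun_prop
  rw [contDiff_euclidean]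
  intro i
  fin_cases i
  · simp only [Fin.zero_eta, GG_zero]; exact hd
  · simp only [Fin.mk_one, GG_one]; exact hc.sub (hb.comp hd)

lemma gm_local {a b : ℝ → ℝ} {δ : ℝ} (h : GoodAB a b δ) (x : E2) :
    ContDiffAt ℝ (⊤ : ℕ∞) (gm a b) x ∧ ∃ D : E2 →L[ℝ] E2, HasFDerivAt (gm a b) D x ∧ D.det = 1 := by
  have hcont : Continuous fun x : E2 => LL x 1 := by simp only [LL_one]; fun_prop
  rcases (LL_ge x).eq_or_lt with hx | hx
  · have hev : gm a b =ᶠ[nhds x] id := by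
      have : ∀ᶠ y in nhds x, LL y 1 < -1 + δ :=
        hcont.continuousAt.eventually (gt_mem_nhds (by change LL x 1 < -1 + δ; rw [← hx]; linarith [h.pos]))
      filter_upwards [this] with y hy
      exact gm_id h y (Or.inl hy)
    refine ⟨contDiffAt_id.congr_of_eventuallyEq hev, ContinuousLinearMap.id ℝ E2,
      (hasFDerivAt_id x).congr_of_eventuallyEq hev, ?_⟩
    exact LinearMap.det_id
  · set p := LL x with hp
    have hxp : PP p = x := PP_LL x
    obtain ⟨D, hD, hdet⟩ := PP_deriv p hx
    have hne : D.det ≠ 0 := by rw [hdet]; have := Real.pi_pos; linarith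
    have hD' : HasFDerivAt PP (D.toContinuousLinearEquivOfDetNeZero hne : E2 →L[ℝ] E2) p := by
      simpa using hD
    have hC := PP_contDiffAt p hx
    have hn : ((⊤ : ℕ∞) : WithTop ℕ∞) ≠ 0 := by simp
    set iv := hC.localInverse hD' hn with hiv
    have hivC : ContDiffAt ℝ (⊤ : ℕ∞) iv (PP p) := hC.to_localInverse hD' hn
    have hivp : iv (PP p) = p := hC.localInverse_apply_image hD' hn
    have hright : ∀ᶠ y in nhds (PP p), PP (iv y) = y :=
      (hC.hasStrictFDerivAt' hD' hn).eventually_right_inverse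
    have hG := GG_contDiff h
    have hcomp : ContDiffAt ℝ (⊤ : ℕ∞) (PP ∘ GG a b ∘ iv) (PP p) := by
      refine ContDiffAt.comp _ ?_ (ContDiffAt.comp _ hG.contDiffAt hivC)
      simp only [Function.comp, hivp]
      exact PP_contDiffAt _ (GG_gt' h hx)
    have hev : gm a b =ᶠ[nhds (PP p)] PP ∘ GG a b ∘ iv := by
      have hc1 : Continuous fun x : E2 => x 1 := by fun_prop
      have h1 : ∀ᶠ y in nhds (PP p), -1 < iv y 1 :=
        (hc1.continuousAt.comp hivC.continuousAt).eventually
          (lt_mem_nhds (by simp only [Function.comp, hivp]; exact hx))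
      filter_upwards [h1, hright] with y hy1 hy2
      have := gm_PP h (iv y) hy1.le
      rw [hy2] at this
      exact this
    have hgC : ContDiffAt ℝ (⊤ : ℕ∞) (gm a b) x := by
      rw [← hxp]; exact hcomp.congr_of_eventuallyEq hev
    refine ⟨hgC, ?_⟩
    have hgd := (hgC.differentiableAt hn).hasFDerivAt
    refine ⟨_, hgd, ?_⟩
    obtain ⟨D1, hD1, hd1⟩ := shV_deriv b (h.smooth_b.differentiable hn) p
    obtain ⟨D2, hD2, hd2⟩ := shH_deriv a (h.smooth_a.differentiable hn) (shV b p)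
    obtain ⟨D3, hD3, hd3⟩ := shV_deriv (fun t => -b t) (h.smooth_b.neg.differentiable hn)
      (shH a (shV b p))
    obtain ⟨D4, hD4, hd4⟩ := PP_deriv (GG a b p) (GG_gt' h hx)
    have hR : HasFDerivAt (fun p => PP (GG a b p)) (D4.comp (D3.comp (D2.comp D1))) p :=
      HasFDerivAt.comp p hD4 (HasFDerivAt.comp p hD3 (HasFDerivAt.comp p hD2 hD1))
    rw [← hxp] at hgd
    have hLft : HasFDerivAt (fun p => gm a b (PP p)) ((fderiv ℝ (gm a b) (PP p)).comp D) p :=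
      HasFDerivAt.comp (g := gm a b) (f := PP) p hgd hD
    have hev2 : (fun p => gm a b (PP p)) =ᶠ[nhds p] fun p => PP (GG a b p) := by
      have hc1 : Continuous fun x : E2 => x 1 := by fun_prop
      filter_upwards [hc1.continuousAt.eventually (lt_mem_nhds hx)] with y hy
      exact gm_PP h y (le_of_lt hy)
    have heq := hLft.unique (hR.congr_of_eventuallyEq hev2)
    have hdd := congrArg ContinuousLinearMap.det heq
    have hm : ∀ A B : E2 →L[ℝ] E2, (A.comp B).det = A.det * B.det := fun A B =>
      LinearMap.det_comp _ _
    rw [hm, hm, hm, hm, hd1, hd2, hd3, hd4, hdet, hxp] at hdd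
    have := Real.pi_pos
    have h3 : (fderiv ℝ (gm a b) x).det * (-(Real.pi / 2)) = 1 * (-(Real.pi / 2)) := by
      rw [hdd]; ring
    exact mul_right_cancel₀ (by linarith) h3

lemma gm_neg' {a b : ℝ → ℝ} {δ : ℝ} (h : GoodAB a b δ) (x : E2) :
    gm a b (gm (fun z => -a z) b x) = x := by
  have := gm_neg h.neg x
  have e : (fun z => - -a z) = a := by funext z; exact neg_neg _
  rw [e] at this
  exact this

/-- The equivalence given by `gm`. -/
noncomputable def gmE {a b : ℝ → ℝ} {δ : ℝ} (h : GoodAB a b δ) : E2 ≃ E2 where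
  toFun := gm a b
  invFun := gm (fun z => -a z) b
  left_inv := gm_neg h
  right_inv := gm_neg' h

lemma gm_contDiff {a b : ℝ → ℝ} {δ : ℝ} (h : GoodAB a b δ) : ContDiff ℝ (⊤ : ℕ∞) (gm a b) :=
  contDiff_iff_contDiffAt.mpr fun x => (gm_local h x).1

lemma mp_of_det (u v : E2 → E2) (hu : Continuous u) (huv : ∀ x, u (v x) = x) (hvu : ∀ x, v (u x) = x)
    (hv : ∀ x, ∃ D : E2 →L[ℝ] E2, HasFDerivAt v D x ∧ D.det = 1) :
    MeasurePreserving u volume volume := by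
  have hmeas : Measurable u := hu.measurable
  refine ⟨hmeas, ?_⟩
  ext s hs
  rw [Measure.map_apply hmeas hs]
  have e : u ⁻¹' s = v '' s := by
    ext x
    constructor
    · intro hx; exact ⟨u x, hx, hvu x⟩
    · rintro ⟨y, hy, rfl⟩
      rw [Set.mem_preimage, huv]; exact hy
  choose D hD hdet using hv
  have hinj : Function.Injective v := Function.LeftInverse.injective huv
  have := lintegral_abs_det_fderiv_eq_addHaar_image (volume : Measure E2) hs
    (fun x _ => (hD x).hasFDerivWithinAt) (f := v) hinj.injOn
  rw [e, ← this]
  simp [hdet]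

lemma gm_measurePreserving {a b : ℝ → ℝ} {δ : ℝ} (h : GoodAB a b δ) :
    MeasurePreserving (gm a b) volume volume :=
  mp_of_det (gm a b) (gm (fun z => -a z) b) (gm_contDiff h).continuous (gm_neg' h) (gm_neg h)
    fun x => (gm_local h.neg x).2

lemma gm_close {a b : ℝ → ℝ} {δ s : ℝ} (h : GoodAB a b δ) (hs : ∀ z, |a z| ≤ s) (x : E2) :
    ‖gm a b x - x‖ ≤ Real.sqrt (δ / 2) + 2 * Real.pi * s := by
  have hs0 : 0 ≤ s := (abs_nonneg _).trans (hs 0)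
  by_cases ha : a (LL x 1 + b (LL x 0)) = 0
  · rw [gm, GG_id ha, PP_LL, sub_self, norm_zero]; have := Real.pi_pos; positivity
  · obtain ⟨h1, h2, h3, h4⟩ := GG_gt h ha
    have hp := h.pos
    conv_lhs => rw [← PP_LL x]
    rw [gm_PP h _ (LL_ge x)]
    refine piD_dist_le _ _ _ _ _ _ (by linarith) (by linarith) (by linarith) (by linarith) ?_ ?_
    · rw [GG_zero, add_sub_cancel_left]; exact hs _
    · rw [GG_one, abs_le]
      have := h.b_nonneg (LL x 0)
      have := h.b_le (LL x 0)
      have := h.b_nonneg (LL x 0 + a (LL x 1 + b (LL x 0)))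
      have := h.b_le (LL x 0 + a (LL x 1 + b (LL x 0)))
      constructor <;> linarith

lemma gm_rot {a b : ℝ → ℝ} {δ α : ℝ} (h : GoodAB a b δ) (hper : ∀ t, b (t + α) = b t) (x : E2) :
    gm a b (rotO α x) = rotO α (gm a b x) := by
  have e1 : rotO α x = PP !₂[LL x 0 + α, LL x 1] := by
    conv_lhs => rw [← PP_LL x]
    rw [PP, rotO_piD, PP]; simp
  have e2 : rotO α (gm a b x) = piD (GG a b (LL x) 0 + α) (GG a b (LL x) 1) := by
    rw [gm, PP, rotO_piD]
  rw [e1, gm_PP h _ (by simpa using LL_ge x), e2, PP]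
  congr 1
  · rw [GG_zero, GG_zero]; simp [hper]; ring
  · rw [GG_one, GG_one]; simp [hper]
    rw [show LL x 0 + α + a (LL x 1 + b (LL x 0)) = LL x 0 + a (LL x 1 + b (LL x 0)) + α by ring,
      hper]

lemma gm_support {a b : ℝ → ℝ} {δ : ℝ} (h : GoodAB a b δ) :
    ∃ K : Set E2, IsCompact K ∧ K ⊆ {x : E2 | 0 < ‖x‖ ∧ ‖x‖ < 1} ∧ ∀ x ∉ K, gm a b x = x := by
  have hp := h.pos
  refine ⟨{x | -1 + δ ≤ 2 * ‖x‖ ^ 2 - 1 ∧ 2 * ‖x‖ ^ 2 - 1 ≤ 1 - δ}, ?_, ?_, ?_⟩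
  · apply Metric.isCompact_of_isClosed_isBounded
    · have hc : Continuous fun x : E2 => 2 * ‖x‖ ^ 2 - 1 := by fun_prop
      exact (isClosed_le continuous_const hc).inter (isClosed_le hc continuous_const)
    · rw [isBounded_iff_forall_norm_le]
      refine ⟨1, fun x hx => ?_⟩
      rw [← sq_le_one_iff₀ (norm_nonneg _)]
      linarith [hx.2]
  · intro x hx
    constructor
    · refine lt_of_le_of_ne (norm_nonneg x) fun h0 => ?_
      have := hx.1
      rw [← h0] at this
      norm_num at this
      linarith
    · rw [← sq_lt_one_iff₀ (norm_nonneg _)]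
      linarith [hx.2]
  · intro x hx
    apply gm_id h
    rw [LL_one]
    by_contra hc
    push Not at hc
    exact hx hc

lemma gm_piD {a b : ℝ → ℝ} {δ : ℝ} (h : GoodAB a b δ) (θ y : ℝ) (hy : -1 ≤ y) :
    gm a b (piD θ y) = piD (θ + a (y + b θ)) (y + b θ - b (θ + a (y + b θ))) := by
  have := gm_PP h !₂[θ, y] (by simpa using hy)
  simpa [PP, GG_zero, GG_one] using this

/-- Number of codewords. -/
def RR (M : ℕ) : ℕ := 2 ^ (M ^ 2)

/-- Number of slots per unit height. -/
def KK (A M : ℕ) : ℕ := A * M * RR M * M ^ 2 * 8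

/-- Slot width. -/
noncomputable def ll (A M : ℕ) : ℝ := 1 / (KK A M : ℝ)

/-- Vertical shear profile, in units of slots. -/
def VV (M : ℕ) (n : ℤ) : ℤ :=
  if n % 2 = 0 then (RR M : ℤ) * ((n / 2) % (M : ℤ) ^ 2)
  else (((n / 2) % (M : ℤ) ^ 2) % M + 1) * ((RR M : ℤ) * (M : ℤ) ^ 2 * 8)

lemma RR_pos (M : ℕ) : 0 < RR M := by unfold RR; positivity

lemma card_codes (M : ℕ) [NeZero M] : Fintype.card (ZMod (M ^ 2) → Bool) = RR M := by
  simp [RR, ZMod.card]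

/-- The code. -/
noncomputable def code (M : ℕ) [NeZero M] (w : ℕ) : ZMod (M ^ 2) → Bool :=
  (Fintype.equivFinOfCardEq (card_codes M)).symm ⟨w % RR M, Nat.mod_lt _ (RR_pos M)⟩

lemma code_inj (M : ℕ) [NeZero M] {w w' : ℕ} (hw : w < RR M) (hw' : w' < RR M)
    (h : code M w = code M w') : w = w' := by
  have := (Fintype.equivFinOfCardEq (card_codes M)).symm.injective h
  rw [Fin.mk.injEq, Nat.mod_eq_of_lt hw, Nat.mod_eq_of_lt hw'] at this
  exact this

/-- The bits. -/
noncomputable def bit (M : ℕ) [NeZero M] (n : ℤ) : Bool :=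
  code M (n % (RR M : ℤ)).toNat (((n / (RR M : ℤ) : ℤ)) : ZMod (M ^ 2))

lemma bit_eq (M : ℕ) [NeZero M] (m0 k : ℤ) (w : ℕ) (hw : w < RR M) :
    bit M ((RR M : ℤ) * m0 + w + (RR M : ℤ) * k) = code M w (((m0 + k : ℤ)) : ZMod (M ^ 2)) := by
  have hR : (RR M : ℤ) ≠ 0 := by have := RR_pos M; omega
  have e : (RR M : ℤ) * m0 + w + (RR M : ℤ) * k = w + (RR M : ℤ) * (m0 + k) := by ring
  unfold bit
  rw [e, Int.add_mul_emod_self_left, Int.add_mul_ediv_left _ _ hR]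
  have h1 : (w : ℤ) % (RR M : ℤ) = w := Int.emod_eq_of_lt (by positivity) (by exact_mod_cast hw)
  have h2 : (w : ℤ) / (RR M : ℤ) = 0 := Int.ediv_eq_zero_of_lt (by positivity) (by exact_mod_cast hw)
  rw [h1, h2, Int.toNat_natCast, zero_add]

lemma VV_even (M : ℕ) (e : ℤ) : VV M (2 * e) = (RR M : ℤ) * (e % (M : ℤ) ^ 2) := by
  unfold VV
  rw [if_pos (by omega), show 2 * e / 2 = e by omega]

lemma VV_odd (M : ℕ) (e : ℤ) :
    VV M (2 * e + 1) = ((e % (M : ℤ) ^ 2) % M + 1) * ((RR M : ℤ) * (M : ℤ) ^ 2 * 8) := by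
  unfold VV
  rw [if_neg (by omega), show (2 * e + 1) / 2 = e by omega]

lemma VV_per (M : ℕ) (n : ℤ) : VV M (n + 2 * (M : ℤ) ^ 2) = VV M n := by
  unfold VV
  have h1 : (n + 2 * (M : ℤ) ^ 2) % 2 = n % 2 := by omega
  have h2 : (n + 2 * (M : ℤ) ^ 2) / 2 = n / 2 + (M : ℤ) ^ 2 := by omega
  rw [h1, h2, Int.add_emod_right]

lemma ham_ball {ι : Type*} [Fintype ι] [DecidableEq ι] (c0 : ι → Bool) :
    (((Finset.univ.filter fun c : ι → Bool =>
      4 * (Finset.univ.filter fun z => c z ≠ c0 z).card < Fintype.card ι).card : ℕ) : ℝ)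
      ≤ (25 / 14 : ℝ) ^ Fintype.card ι := by
  classical
  set B := Finset.univ.filter fun c : ι → Bool =>
      4 * (Finset.univ.filter fun z => c z ≠ c0 z).card < Fintype.card ι with hB
  set n := Fintype.card ι
  have h1 : ∑ c : ι → Bool, ∏ z, (if c z ≠ c0 z then (1 / 4 : ℝ) else 1) = (5 / 4) ^ n := by
    have := (Finset.prod_univ_sum (fun _ : ι => (Finset.univ : Finset Bool))
      (fun z b => if b ≠ c0 z then (1 / 4 : ℝ) else 1)).symm
    rw [Fintype.piFinset_univ] at this
    rw [this]
    have h2 : ∀ z, ∑ b : Bool, (if b ≠ c0 z then (1 / 4 : ℝ) else 1) = 5 / 4 := by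
      intro z
      cases c0 z <;> norm_num
    simp only [h2, Finset.prod_const, Finset.card_univ]
    rfl
  have h3 : ∀ c ∈ B, (7 / 10 : ℝ) ^ n ≤ ∏ z, (if c z ≠ c0 z then (1 / 4 : ℝ) else 1) := by
    intro c hc
    rw [hB, Finset.mem_filter] at hc
    rw [Finset.prod_ite, Finset.prod_const, Finset.prod_const_one, mul_one]
    set k := (Finset.univ.filter fun z => c z ≠ c0 z).card
    calc (7 / 10 : ℝ) ^ n ≤ (7 / 10 : ℝ) ^ (4 * k) :=
          pow_le_pow_of_le_one (by norm_num) (by norm_num) hc.2.le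
      _ = ((7 / 10 : ℝ) ^ 4) ^ k := by rw [pow_mul]
      _ ≤ (1 / 4) ^ k := by gcongr; norm_num
  have h4 : (B.card : ℝ) * (7 / 10) ^ n ≤ (5 / 4) ^ n := by
    rw [← h1]
    calc (B.card : ℝ) * (7 / 10) ^ n = ∑ c ∈ B, (7 / 10 : ℝ) ^ n := by simp
      _ ≤ ∑ c ∈ B, ∏ z, (if c z ≠ c0 z then (1 / 4 : ℝ) else 1) := Finset.sum_le_sum h3
      _ ≤ _ := by
        apply Finset.sum_le_sum_of_subset_of_nonneg (Finset.subset_univ _)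
        intro c _ _
        apply Finset.prod_nonneg
        intro z _
        split_ifs <;> norm_num
  have h5 : (25 / 14 : ℝ) ^ n * (7 / 10) ^ n = (5 / 4) ^ n := by
    rw [← mul_pow]; norm_num
  have h6 : (0 : ℝ) < (7 / 10) ^ n := by positivity
  nlinarith

/-- Closed good part of the slot `m` of width `w`. -/
def gI (w ρ : ℝ) (m : ℤ) : Set ℝ := Set.Icc (w * (m + ρ)) (w * (m + 1 - ρ))

lemma mem_gI {w ρ x : ℝ} {m : ℤ} : x ∈ gI w ρ m ↔ w * (m + ρ) ≤ x ∧ x ≤ w * (m + 1 - ρ) := Iff.rfl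

lemma measure_S (A M : ℕ) [NeZero M] [NeZero A] (ρ : ℝ) (hρ : 0 < ρ)
    (S : Set ℝ) (hS : ∀ y ∈ S, -1 ≤ y ∧ y < 1)
    (hH : ∀ y ∈ S, ∀ y' ∈ S, ∀ (m0 : ℤ) (w w' : ℕ), w < RR M → w' < RR M →
      y ∈ gI (ll A M) ρ ((RR M : ℤ) * m0 + w) → y' ∈ gI (ll A M) ρ ((RR M : ℤ) * m0 + w') →
      4 * (Finset.univ.filter fun z => code M w z ≠ code M w' z).card < M ^ 2) :
    volume S ≤ ENNReal.ofReal (4 * ρ + 2 * (25 / 28) ^ (M ^ 2)) := by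
  classical
  set R := RR M with hRdef
  set K := KK A M with hKdef
  set ℓ := ll A M with hldef
  have hRpos : 0 < R := RR_pos M
  have hK0 : 0 < K := by
    rw [hKdef, KK]
    have := NeZero.pos A
    have := NeZero.pos M
    positivity
  have hKr : (0 : ℝ) < K := by exact_mod_cast hK0
  have hl : ℓ * K = 1 := by rw [hldef, ll, ← hKdef]; exact one_div_mul_cancel hKr.ne'
  have hl0 : 0 < ℓ := by rw [hldef, ll]; positivity
  obtain ⟨B, hBK⟩ : ∃ B : ℕ, K = R * B := ⟨A * M * M ^ 2 * 8, by rw [hKdef, KK]; ring⟩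
  let W : ℤ → Finset ℕ := fun m0 => (Finset.range R).filter fun w =>
    ∃ y ∈ S, y ∈ gI ℓ ρ ((R : ℤ) * m0 + w)
  have hW : ∀ m0, ((W m0).card : ℝ) ≤ (25 / 14) ^ (M ^ 2) := by
    intro m0
    rcases (W m0).eq_empty_or_nonempty with h | ⟨w0, hw0⟩
    · rw [h]; simp; positivity
    · obtain ⟨hw0R, y0, hy0S, hy0⟩ := Finset.mem_filter.mp hw0
      rw [Finset.mem_range] at hw0R
      have hb := ham_ball (code M w0)
      rw [ZMod.card] at hb
      refine le_trans ?_ hb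
      norm_cast
      apply Finset.card_le_card_of_injOn (code M)
      · intro w hw
        obtain ⟨hwR, y, hyS, hy⟩ := Finset.mem_filter.mp hw
        rw [Finset.mem_range] at hwR
        simp only [Finset.coe_filter, Finset.mem_univ, true_and, Set.mem_ofPred_eq]
        exact hH y hyS y0 hy0S m0 w w0 hwR hw0R hy hy0
      · intro w hw w' hw' h
        exact code_inj M (Finset.mem_range.mp (Finset.mem_filter.mp hw).1)
          (Finset.mem_range.mp (Finset.mem_filter.mp hw').1) h
  let I := Finset.Ico (-(K : ℤ)) K
  let J := Finset.Ico (-(B : ℤ)) B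
  have hcov : S ⊆ (⋃ m ∈ I, Set.Icc (ℓ * m) (ℓ * (m + ρ))) ∪
      (⋃ m ∈ I, Set.Icc (ℓ * (m + 1 - ρ)) (ℓ * (m + 1))) ∪
      ⋃ m0 ∈ J, ⋃ w ∈ W m0, Set.Icc (ℓ * ((R : ℝ) * m0 + w)) (ℓ * ((R : ℝ) * m0 + w + 1)) := by
    intro y hy
    obtain ⟨hy1, hy2⟩ := hS y hy
    set m := ⌊y / ℓ⌋ with hm
    have f1 : ℓ * m ≤ y := by
      have := Int.floor_le (y / ℓ); rw [le_div_iff₀ hl0] at this; linarith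
    have f2 : y < ℓ * (m + 1) := by
      have := Int.lt_floor_add_one (y / ℓ); rw [div_lt_iff₀ hl0] at this; linarith
    have hmI : m ∈ I := by
      rw [Finset.mem_Ico]
      constructor
      · have : (-(K : ℝ)) < m + 1 := by
          by_contra hc; push Not at hc
          nlinarith
        have : (-(K : ℤ)) < m + 1 := by exact_mod_cast this
        omega
      · have : (m : ℝ) < K := by
          by_contra hc; push Not at hc
          nlinarith
        exact_mod_cast this
    by_cases c1 : y ≤ ℓ * (m + ρ)
    · left; left
      simp only [Set.mem_iUnion]
      exact ⟨m, hmI, f1, c1⟩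
    by_cases c2 : ℓ * (m + 1 - ρ) ≤ y
    · left; right
      simp only [Set.mem_iUnion]
      exact ⟨m, hmI, c2, f2.le⟩
    right
    push Not at c1 c2
    have hRz : (0 : ℤ) < R := by exact_mod_cast hRpos
    have hdm := Int.mul_ediv_add_emod m R
    have hm1 := Int.emod_nonneg m hRz.ne'
    have hm2 := Int.emod_lt_of_pos m hRz
    obtain ⟨w, hw⟩ := Int.eq_ofNat_of_zero_le hm1
    set m0 := m / (R : ℤ)
    have hmw : m = (R : ℤ) * m0 + w := by rw [← hw]; exact hdm.symm
    have hwR : w < R := by rw [hw] at hm2; exact_mod_cast hm2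
    have hmr : (m : ℝ) = (R : ℝ) * m0 + w := by rw [hmw]; push_cast; ring
    simp only [Set.mem_iUnion]
    rw [Finset.mem_Ico] at hmI
    refine ⟨m0, ?_, w, ?_, ?_⟩
    · rw [Finset.mem_Ico]
      have hKz : (K : ℤ) = R * B := by exact_mod_cast hBK
      constructor
      · by_contra hc; push Not at hc
        have : m0 + 1 ≤ -B := by omega
        nlinarith
      · by_contra hc; push Not at hc
        nlinarith
    · refine Finset.mem_filter.mpr ⟨Finset.mem_range.mpr hwR, y, hy, ?_⟩
      rw [← hmw, mem_gI]
      exact ⟨c1.le, c2.le⟩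
    · rw [← hmr]; exact ⟨f1, f2.le⟩
  have hIc : (I.card : ℝ) = 2 * K := by
    have : I.card = 2 * K := by simp [I]; omega
    rw [this]; push_cast; ring
  have hJc : (J.card : ℝ) = 2 * B := by
    have : J.card = 2 * B := by simp [J]; omega
    rw [this]; push_cast; ring
  have m1 : volume (⋃ m ∈ I, Set.Icc (ℓ * (m : ℝ)) (ℓ * (m + ρ))) ≤ ENNReal.ofReal (2 * ρ) := by
    refine (measure_biUnion_finset_le I _).trans ?_
    simp only [Real.volume_Icc]
    rw [← ENNReal.ofReal_sum_of_nonneg (fun i _ => by nlinarith)]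
    apply ENNReal.ofReal_le_ofReal
    rw [Finset.sum_congr rfl (fun (i : ℤ) _ => show ℓ * ((i : ℝ) + ρ) - ℓ * i = ℓ * ρ by ring)]
    rw [Finset.sum_const, nsmul_eq_mul, hIc]
    apply le_of_eq
    linear_combination 2 * ρ * hl
  have m2 : volume (⋃ m ∈ I, Set.Icc (ℓ * ((m : ℝ) + 1 - ρ)) (ℓ * (m + 1))) ≤
      ENNReal.ofReal (2 * ρ) := by
    refine (measure_biUnion_finset_le I _).trans ?_
    simp only [Real.volume_Icc]
    rw [← ENNReal.ofReal_sum_of_nonneg (fun i _ => by nlinarith)]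
    apply ENNReal.ofReal_le_ofReal
    rw [Finset.sum_congr rfl
      (fun (i : ℤ) _ => show ℓ * ((i : ℝ) + 1) - ℓ * (i + 1 - ρ) = ℓ * ρ by ring)]
    rw [Finset.sum_const, nsmul_eq_mul, hIc]
    apply le_of_eq
    linear_combination 2 * ρ * hl
  have m3 : volume (⋃ m0 ∈ J, ⋃ w ∈ W m0,
      Set.Icc (ℓ * ((R : ℝ) * m0 + w)) (ℓ * ((R : ℝ) * m0 + w + 1))) ≤
      ENNReal.ofReal (2 * (25 / 28) ^ (M ^ 2)) := by
    refine (measure_biUnion_finset_le J _).trans ?_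
    have hin : ∀ m0 ∈ J, volume (⋃ w ∈ W m0,
      Set.Icc (ℓ * ((R : ℝ) * m0 + w)) (ℓ * ((R : ℝ) * m0 + w + 1))) ≤
        ENNReal.ofReal ((25 / 14) ^ (M ^ 2) * ℓ) := by
      intro m0 _
      refine (measure_biUnion_finset_le (W m0) _).trans ?_
      simp only [Real.volume_Icc]
      rw [← ENNReal.ofReal_sum_of_nonneg (fun i _ => by nlinarith)]
      apply ENNReal.ofReal_le_ofReal
      rw [Finset.sum_congr rfl (fun (w : ℕ) _ => show ℓ * ((R : ℝ) * m0 + w + 1) -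
        ℓ * ((R : ℝ) * m0 + w) = ℓ by ring)]
      rw [Finset.sum_const, nsmul_eq_mul]
      exact mul_le_mul_of_nonneg_right (hW m0) hl0.le
    refine (Finset.sum_le_sum hin).trans ?_
    rw [← ENNReal.ofReal_sum_of_nonneg (fun i _ => by positivity)]
    apply ENNReal.ofReal_le_ofReal
    rw [Finset.sum_const, nsmul_eq_mul, hJc]
    have hR2 : (R : ℝ) = 2 ^ (M ^ 2) := by rw [hRdef, RR]; push_cast; rfl
    have e1 : (25 / 14 : ℝ) ^ (M ^ 2) = (25 / 28) ^ (M ^ 2) * R := by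
      rw [hR2, ← mul_pow]; norm_num
    have hKB : (K : ℝ) = R * B := by exact_mod_cast hBK
    rw [e1]
    apply le_of_eq
    rw [hKB] at hl
    linear_combination 2 * (25 / 28) ^ (M ^ 2) * hl
  calc volume S ≤ _ := measure_mono hcov
    _ ≤ _ := measure_union_le _ _
    _ ≤ _ := add_le_add ((measure_union_le _ _).trans (add_le_add m1 m2)) m3
    _ = _ := by
      rw [← ENNReal.ofReal_add (by positivity) (by positivity),
        ← ENNReal.ofReal_add (by positivity) (by positivity)]
      congr 1; ring

lemma gI_disj {w ρ : ℝ} (hw : 0 < w) (hρ : 0 < ρ) {m n : ℤ} (hmn : m ≠ n) :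
    Disjoint (gI w ρ m) (gI w ρ n) := by
  rw [Set.disjoint_left]
  intro x hx hx'
  rw [mem_gI] at hx hx'
  rcases lt_or_gt_of_ne hmn with h | h
  · have : (m : ℝ) + 1 ≤ n := by exact_mod_cast h
    nlinarith
  · have : (n : ℝ) + 1 ≤ m := by exact_mod_cast h
    nlinarith

lemma gI_union_vol {w ρ : ℝ} (hw : 0 < w) (hρ : 0 < ρ) (hρ' : ρ < 1 / 2) (P : Finset ℤ) :
    volume.real (⋃ n ∈ P, gI w ρ n) = P.card * (w * (1 - 2 * ρ)) := by
  rw [measureReal_biUnion_finset (fun m _ n _ h => gI_disj hw hρ h)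
    (fun n _ => measurableSet_Icc) (fun n _ => by simp [gI])]
  have : ∀ n : ℤ, volume.real (gI w ρ n) = w * (1 - 2 * ρ) := by
    intro n
    rw [gI, Real.volume_real_Icc_of_le (by nlinarith)]; ring
  simp only [this, Finset.sum_const, nsmul_eq_mul]

lemma int_sep (J : ℕ) (hJ : 0 < J) (ρ h : ℝ) (hρ : 0 < ρ) (hρ' : ρ < 1 / 2) (hh : 0 ≤ h)
    (F' F'' : ℝ → E2) (c' : Continuous F') (c'' : Continuous F'')
    (n' : ∀ t, ‖F'' t‖ ≤ 2)
    (P : Finset ℤ) (hP : P ⊆ Finset.Ico 0 (J : ℤ))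
    (hsep : ∀ n ∈ P, ∀ θ ∈ gI (1 / J) ρ n, ∀ k ∈ Finset.Ico 0 (J : ℤ), ∀ t ∈ gI (1 / J) ρ k,
      h ≤ dist (F' θ) (F'' t)) :
    ∃ f : E2 → ℝ, LipschitzWith 1 f ∧
      P.card * (1 / J * (1 - 2 * ρ)) * h - 8 * ρ ≤
        (∫ θ in Set.Icc (0 : ℝ) 1, f (F' θ)) - ∫ θ in Set.Icc (0 : ℝ) 1, f (F'' θ) := by
  have hJr : (0 : ℝ) < J := by exact_mod_cast hJ
  set w : ℝ := 1 / J with hw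
  have hw0 : 0 < w := by positivity
  have hwJ : w * J = 1 := by rw [hw]; exact one_div_mul_cancel hJr.ne'
  set U := fun P : Finset ℤ => ⋃ n ∈ P, gI w ρ n with hU
  have hUm : ∀ P, MeasurableSet (U P) := fun P =>
    Finset.measurableSet_biUnion P fun n _ => measurableSet_Icc
  set Q := Finset.Ico 0 (J : ℤ) with hQ
  have hUsub : ∀ P ⊆ Q, U P ⊆ Set.Icc 0 1 := by
    intro P hP x hx
    simp only [hU, Set.mem_iUnion] at hx
    obtain ⟨n, hn, hx⟩ := hx
    have := Finset.mem_Ico.mp (hP hn)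
    have h1 : (0 : ℝ) ≤ n := by exact_mod_cast this.1
    have h2 : (n : ℝ) + 1 ≤ J := by exact_mod_cast this.2
    rw [mem_gI] at hx
    constructor <;> nlinarith
  set V := Set.image F'' (U Q) with hV
  have h0Q : (0 : ℤ) ∈ Q := Finset.mem_Ico.mpr ⟨le_rfl, by exact_mod_cast hJ⟩
  have hVne : V.Nonempty := by
    refine ⟨F'' (w * ρ), w * ρ, ?_, rfl⟩
    simp only [hU, Set.mem_iUnion]
    refine ⟨0, h0Q, ?_⟩
    rw [mem_gI]; push_cast; constructor <;> nlinarith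
  refine ⟨fun x => infDist x V, lipschitz_infDist_pt V, ?_⟩
  have k' : Continuous fun θ => infDist (F' θ) V := (continuous_infDist_pt V).comp c'
  have k'' : Continuous fun θ => infDist (F'' θ) V := (continuous_infDist_pt V).comp c''
  have I' : IntegrableOn (fun θ => infDist (F' θ) V) (Set.Icc 0 1) :=
    k'.continuousOn.integrableOn_compact isCompact_Icc
  have I'' : IntegrableOn (fun θ => infDist (F'' θ) V) (Set.Icc 0 1) :=
    k''.continuousOn.integrableOn_compact isCompact_Icc
  have low : P.card * (w * (1 - 2 * ρ)) * h ≤ ∫ θ in Set.Icc (0 : ℝ) 1, infDist (F' θ) V := by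
    have s1 : volume.real (U P) • h ≤ ∫ θ in U P, infDist (F' θ) V := by
      apply setIntegral_ge_of_const_le (hUm P)
      · exact ((measure_mono (hUsub P hP)).trans_lt (by simp)).ne
      · intro x hx
        rw [le_infDist hVne]
        rintro _ ⟨t, ht, rfl⟩
        simp only [hU, Set.mem_iUnion] at hx ht
        obtain ⟨n, hn, hx⟩ := hx
        obtain ⟨k, hk, ht⟩ := ht
        exact hsep n hn x hx k hk t ht
      · exact I'.mono_set (hUsub P hP)
    rw [gI_union_vol hw0 hρ hρ', smul_eq_mul] at s1
    refine s1.trans ?_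
    apply setIntegral_mono_set I'
    · exact Filter.Eventually.of_forall fun x => infDist_nonneg
    · exact Filter.Eventually.of_forall (hUsub P hP)
  have up : ∫ θ in Set.Icc (0 : ℝ) 1, infDist (F'' θ) V ≤ 8 * ρ := by
    have hsplit : Set.Icc (0 : ℝ) 1 = U Q ∪ (Set.Icc 0 1 \ U Q) :=
      (Set.union_sdiff_cancel (hUsub Q le_rfl)).symm
    rw [hsplit, setIntegral_union Set.disjoint_sdiff_right (measurableSet_Icc.diff (hUm Q))
      (I''.mono_set (hUsub Q le_rfl)) (I''.mono_set Set.sdiff_subset)]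
    have z1 : ∫ θ in U Q, infDist (F'' θ) V = 0 := by
      apply setIntegral_eq_zero_of_forall_eq_zero
      intro x hx
      exact infDist_zero_of_mem ⟨x, hx, rfl⟩
    have hvol : volume.real (Set.Icc (0 : ℝ) 1 \ U Q) = 2 * ρ := by
      rw [measureReal_sdiff (hUsub Q le_rfl) (hUm Q) (h₁ := by simp), gI_union_vol hw0 hρ hρ',
        Real.volume_real_Icc_of_le zero_le_one]
      have : (Q.card : ℝ) = J := by simp [hQ]
      rw [this]
      linear_combination (2 * ρ - 1) * hwJ
    have z2 : ‖∫ θ in Set.Icc (0 : ℝ) 1 \ U Q, infDist (F'' θ) V‖ ≤ 4 * (2 * ρ) := by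
      rw [← hvol]
      apply norm_setIntegral_le_of_norm_le_const
      · exact (measure_mono Set.sdiff_subset).trans_lt (by simp)
      · intro x _
        rw [Real.norm_of_nonneg infDist_nonneg]
        obtain ⟨v, t, ht, rfl⟩ := hVne
        have hm : F'' t ∈ V := ⟨t, ht, rfl⟩
        refine (infDist_le_dist_of_mem hm).trans ?_
        rw [dist_eq_norm]
        refine (norm_sub_le _ _).trans ?_
        linarith [n' x, n' t]
    rw [z1]
    have := le_trans (le_abs_self _) z2
    linarith
  linarith

lemma piD_continuous (y : ℝ) : Continuous fun θ => piD θ y := by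
  unfold piD
  apply (EuclideanSpace.equiv (Fin 2) ℝ).symm.continuous.comp
  apply continuous_pi
  intro i
  fin_cases i
  · simp; fun_prop
  · simp; fun_prop

lemma integral_circle (g : E2 → E2) (hg : Continuous g) (f : E2 → ℝ) (hf : LipschitzWith 1 f)
    (y : ℝ) : ∫ x, f x ∂(Measure.map g (diskCircleMeasure y)) =
      ∫ θ in Set.Icc (0 : ℝ) 1, f (g (piD θ y)) := by
  rw [integral_map hg.measurable.aemeasurable hf.continuous.aestronglyMeasurable,
    diskCircleMeasure, integral_map (piD_continuous y).measurable.aemeasurable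
      (f := fun x => f (g x)) (hf.continuous.comp hg).aestronglyMeasurable]

/-- Angular cell width. -/
noncomputable def ww (q M : ℕ) : ℝ := 1 / ((2 * M ^ 2 * q : ℕ) : ℝ)

/-- The configuration of shear profiles. -/
structure Cfg (q A M : ℕ) [NeZero M] (ε ρ ρb : ℝ) (a b : ℝ → ℝ) : Prop where
  good : GoodAB a b (1 / A)
  hA : (1 : ℝ) / A ≤ ε / 16
  hA0 : 0 < A
  hq0 : 0 < q
  hε : ε ≤ 1
  hρb : 0 < ρb
  hρ : 0 < ρ
  bv : ∀ n : ℤ, ∀ θ ∈ gI (ww q M) ρb n, b θ = ll A M * VV M n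
  av : ∀ n : ℤ, ∀ z ∈ gI (ll A M) ρ n, -1 + ε / 2 ≤ z → z ≤ 1 - ε / 2 + 1 / A →
    a z = if bit M n then ww q M else 0

lemma ww_pos {q M : ℕ} [NeZero M] (hq : 0 < q) : 0 < ww q M := by
  have := NeZero.pos M
  unfold ww; positivity

lemma img {q A M : ℕ} [NeZero M] {ε ρ ρb : ℝ} {a b : ℝ → ℝ} (C : Cfg q A M ε ρ ρb a b)
    {y θ : ℝ} {m n : ℤ} (hy : y ∈ gI (ll A M) ρ m) (hy1 : -1 + ε / 2 ≤ y) (hy2 : y ≤ 1 - ε / 2)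
    (hθ : θ ∈ gI (ww q M) ρb n) :
    gm a b (piD θ y) = if bit M (m + VV M n) then
      piD (θ + ww q M) (y + ll A M * VV M n - ll A M * VV M (n + 1)) else piD θ y := by
  have hb := C.bv n θ hθ
  have hb0 := C.good.b_nonneg θ
  have hb1 := C.good.b_le θ
  have hA := C.hA
  have hAp := C.good.pos
  rw [gm_piD C.good θ y (by linarith)]
  have hz : y + b θ ∈ gI (ll A M) ρ (m + VV M n) := by
    rw [mem_gI] at hy ⊢
    rw [hb]; push_cast
    constructor <;> linarith
  rw [C.av _ _ hz (by linarith) (by linarith)]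
  split_ifs with h
  · have hθ' : θ + ww q M ∈ gI (ww q M) ρb (n + 1) := by
      rw [mem_gI] at hθ ⊢
      push_cast
      constructor <;> linarith
    rw [C.bv _ _ hθ', hb]
  · rw [add_zero]
    congr 1; ring

lemma ll_pos {A M : ℕ} [NeZero M] (hA : 0 < A) : 0 < ll A M := by
  have := NeZero.pos M
  have := RR_pos M
  unfold ll KK
  positivity

lemma ll_D {A M : ℕ} [NeZero M] (hA : 0 < A) :
    ll A M * ((RR M : ℝ) * (M : ℝ) ^ 2 * 8) = 1 / (A * M) := by
  have h1 := NeZero.pos M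
  have h2 := RR_pos M
  have h1' : (0 : ℝ) < M := by exact_mod_cast h1
  have h2' : (0 : ℝ) < RR M := by exact_mod_cast h2
  have h3 : (0 : ℝ) < A := by exact_mod_cast hA
  unfold ll KK
  push_cast
  field_simp

lemma lVV_even {A M : ℕ} [NeZero M] (hA : 0 < A) (e : ℤ) :
    0 ≤ ll A M * VV M (2 * e) ∧ ll A M * VV M (2 * e) ≤ 1 / (A * M) / 8 := by
  have hl := ll_pos (M := M) hA
  have h1 : (0 : ℤ) < (M : ℤ) ^ 2 := by have := NeZero.pos M; positivity
  have m1 := Int.emod_nonneg e h1.ne'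
  have m2 := Int.emod_lt_of_pos e h1
  rw [VV_even, ← ll_D hA]
  push_cast
  have m1' : (0 : ℝ) ≤ ((e % (M : ℤ) ^ 2 : ℤ) : ℝ) := by exact_mod_cast m1
  have m2' : ((e % (M : ℤ) ^ 2 : ℤ) : ℝ) ≤ (M : ℝ) ^ 2 := by exact_mod_cast m2.le
  constructor
  · positivity
  · have : (RR M : ℝ) * ((e % (M : ℤ) ^ 2 : ℤ) : ℝ) ≤ (RR M : ℝ) * (M : ℝ) ^ 2 := by gcongr
    nlinarith

/-- Level index of an odd cell. -/
def jj (M : ℕ) (e : ℤ) : ℤ := (e % (M : ℤ) ^ 2) % M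

lemma jj_nonneg (M : ℕ) [NeZero M] (e : ℤ) : 0 ≤ jj M e :=
  Int.emod_nonneg _ (by have := NeZero.pos M; positivity)

lemma jj_lt (M : ℕ) [NeZero M] (e : ℤ) : jj M e < M :=
  Int.emod_lt_of_pos _ (by have := NeZero.pos M; positivity)

lemma lVV_odd {A M : ℕ} [NeZero M] (hA : 0 < A) (e : ℤ) :
    ll A M * VV M (2 * e + 1) = ((jj M e : ℝ) + 1) * (1 / (A * M)) := by
  rw [VV_odd, ← ll_D hA, jj]
  push_cast; ring

lemma lVV_le {A M : ℕ} [NeZero M] (hA : 0 < A) (n : ℤ) :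
    0 ≤ ll A M * VV M n ∧ ll A M * VV M n ≤ 1 / A := by
  have h1 : (1 : ℝ) ≤ M := by exact_mod_cast NeZero.pos M
  have h3 : (0 : ℝ) < A := by exact_mod_cast hA
  have hD : (M : ℝ) * (1 / (A * M)) = 1 / A := by field_simp
  have hD0 : (0 : ℝ) < 1 / (A * M) := by positivity
  rcases Int.even_or_odd' n with ⟨e, rfl | rfl⟩
  · obtain ⟨u, v⟩ := lVV_even (M := M) hA e
    refine ⟨u, ?_⟩
    nlinarith
  · rw [lVV_odd hA]
    have j0 : (0 : ℝ) ≤ jj M e := by exact_mod_cast jj_nonneg M e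
    have j1 : (jj M e : ℝ) + 1 ≤ M := by exact_mod_cast jj_lt M e
    constructor
    · positivity
    · rw [← hD]; gcongr

/-- Separation constant. -/
noncomputable def cc (q A : ℕ) (ε : ℝ) : ℝ := min (1 / (8 * A)) (2 * Real.sqrt (ε / 8) / q)

lemma ang_sep {q M : ℕ} [NeZero M] (hq : 0 < q) {ρb : ℝ} (hρb : 0 < ρb) {e e' : ℤ}
    (hj : jj M e = jj M e') (hne : e % (M : ℤ) ^ 2 ≠ e' % (M : ℤ) ^ 2)
    {θ θ' : ℝ} (hθ : θ ∈ gI (ww q M) ρb (2 * e)) (hθ' : θ' ∈ gI (ww q M) ρb (2 * e')) (k : ℤ) :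
    1 / (2 * q * M) ≤ |θ - θ' - k| := by
  have hM0 : (0 : ℝ) < M := by exact_mod_cast NeZero.pos M
  have hM1 : (1 : ℝ) ≤ M := by exact_mod_cast NeZero.pos M
  have hq' : (0 : ℝ) < q := by exact_mod_cast hq
  have hw := ww_pos (M := M) hq
  set w := ww q M with hwdef
  have hwq : w * (2 * M ^ 2 * q) = 1 := by
    rw [hwdef, ww]; push_cast; field_simp
  have hwM : 1 / (2 * q * M) = w * M := by
    rw [hwdef, ww]; push_cast; field_simp
  have hdvd : (M : ℤ) ∣ e - e' := by
    have h1 : e ≡ e' [ZMOD M] := by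
      have t : ∀ x : ℤ, (x % (M : ℤ) ^ 2) % M = x % M := fun x =>
        Int.emod_emod_of_dvd x (dvd_pow_self _ two_ne_zero)
      unfold jj at hj
      rw [t, t] at hj
      exact hj
    exact h1.symm.dvd
  obtain ⟨c, hc⟩ := hdvd
  set u : ℤ := c - M * q * k with hu
  have hu0 : u ≠ 0 := by
    intro h0
    apply hne
    have : e = e' + (M : ℤ) ^ 2 * (q * k) := by
      have : c = M * q * k := by omega
      rw [this] at hc
      linear_combination hc
    rw [this, Int.add_mul_emod_self_left]
  have hr : θ - θ' - k = (θ - w * (2 * e)) - (θ' - w * (2 * e')) + w * (2 * M * u) := by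
    have hc' : (e : ℝ) - e' = M * c := by exact_mod_cast hc
    rw [hu]; push_cast
    linear_combination k * hwq + 2 * w * hc'
  rw [mem_gI] at hθ hθ'
  push_cast at hθ hθ'
  rw [hwM, hr]
  rcases lt_or_gt_of_ne hu0 with h | h
  · have : (u : ℝ) ≤ -1 := by exact_mod_cast (by omega : u ≤ -1)
    have h2 : w * (2 * M * u) ≤ w * (2 * M * (-1)) := by gcongr
    rw [le_abs]; right
    nlinarith
  · have : (1 : ℝ) ≤ u := by exact_mod_cast h
    have h2 : w * (2 * M * 1) ≤ w * (2 * M * u) := by gcongr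
    rw [le_abs]; left
    nlinarith

lemma sep {q A M : ℕ} [NeZero M] {ε ρ ρb : ℝ} {a b : ℝ → ℝ} (C : Cfg q A M ε ρ ρb a b)
    {y y' θ θ' : ℝ} {m0 e n : ℤ} {v v' : ℕ} (hv : v < RR M) (hv' : v' < RR M)
    (hy : y ∈ gI (ll A M) ρ ((RR M : ℤ) * m0 + v)) (hy1 : -1 + ε / 2 ≤ y) (hy2 : y ≤ 1 - ε / 2)
    (hy' : y' ∈ gI (ll A M) ρ ((RR M : ℤ) * m0 + v')) (hy1' : -1 + ε / 2 ≤ y')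
    (hy2' : y' ≤ 1 - ε / 2)
    (hθ : θ ∈ gI (ww q M) ρb (2 * e)) (hθ' : θ' ∈ gI (ww q M) ρb n)
    (hb : bit M ((RR M : ℤ) * m0 + v + VV M (2 * e)) = true)
    (hb' : bit M ((RR M : ℤ) * m0 + v' + VV M (2 * e)) = false) :
    cc q A ε / M ≤ dist (gm a b (piD θ y)) (gm a b (piD θ' y')) := by
  have hM0 : (0 : ℝ) < M := by exact_mod_cast NeZero.pos M
  have hM1 : (1 : ℝ) ≤ M := by exact_mod_cast NeZero.pos M
  have hq' : (0 : ℝ) < q := by exact_mod_cast C.hq0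
  have hA0 := C.hA0
  have hA' : (0 : ℝ) < A := by exact_mod_cast hA0
  have hA := C.hA
  have hε1 := C.hε
  have hε0 : 0 < ε := by have := C.good.pos; linarith
  have hl := ll_pos (M := M) hA0
  set D : ℝ := 1 / (A * M) with hD
  have hD0 : 0 < D := by positivity
  have hMD : M * D = 1 / A := by rw [hD]; field_simp
  have hDA : D ≤ 1 / A := by rw [← hMD]; nlinarith
  -- closeness of y and y'
  have hlR : ll A M * RR M ≤ D / 8 := by
    have h := ll_D (M := M) hA0
    rw [← hD] at h
    have h2 : (0 : ℝ) < RR M := by exact_mod_cast RR_pos M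
    have h3 : (0 : ℝ) < ll A M * RR M := by positivity
    have h4 : (1 : ℝ) ≤ (M : ℝ) ^ 2 := by nlinarith
    nlinarith
  have hyy : |y - y'| ≤ D / 8 := by
    rw [mem_gI] at hy hy'
    push_cast at hy hy'
    have r1 : (v : ℝ) + 1 ≤ RR M := by exact_mod_cast hv
    have r2 : (v' : ℝ) + 1 ≤ RR M := by exact_mod_cast hv'
    have r3 : (0 : ℝ) ≤ v := by positivity
    have r4 : (0 : ℝ) ≤ v' := by positivity
    have hρ := C.hρ
    refine le_trans ?_ hlR
    rw [abs_le]
    constructor <;> nlinarith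
  rw [abs_le] at hyy
  rw [img C hy hy1 hy2 hθ, hb, if_pos rfl, img C hy' hy1' hy2' hθ']
  obtain ⟨E0, E1⟩ := lVV_even (M := M) hA0 e
  rw [← hD] at E1
  set Y := y + ll A M * VV M (2 * e) - ll A M * VV M (2 * e + 1) with hY
  obtain ⟨F0, F1⟩ := lVV_le (M := M) hA0 (2 * e + 1)
  obtain ⟨G0, G1⟩ := lVV_le (M := M) hA0 (2 * e)
  have hYr : -1 + ε / 4 ≤ Y ∧ Y ≤ 1 := by constructor <;> linarith
  rw [lVV_odd hA0 e, ← hD] at hY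
  have j0 : (0 : ℝ) ≤ jj M e := by exact_mod_cast jj_nonneg M e
  have jD : 0 ≤ (jj M e : ℝ) * D := by positivity
  have key : ∀ θ₁ θ₂ Y', -1 + ε / 4 ≤ Y' → Y' ≤ 1 → D / 2 ≤ |Y - Y'| →
      cc q A ε / M ≤ dist (piD θ₁ Y) (piD θ₂ Y') := by
    intro θ₁ θ₂ Y' h1 h2 h3
    have := piD_dist_ge_radial θ₁ Y θ₂ Y' (by linarith) hYr.2 (by linarith) h2
    rw [dist_eq_norm]
    refine le_trans ?_ this
    have hc : cc q A ε ≤ 1 / (8 * A) := min_le_left _ _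
    calc cc q A ε / M ≤ 1 / (8 * A) / M := by gcongr
      _ = D / 8 := by rw [hD]; field_simp
      _ ≤ _ := by linarith
  split_ifs with hb''
  swap
  · apply key _ _ _ (by linarith) (by linarith)
    rw [le_abs]; right; linarith
  obtain ⟨P0, P1⟩ := lVV_le (M := M) hA0 n
  obtain ⟨Q0, Q1⟩ := lVV_le (M := M) hA0 (n + 1)
  have hYr' : -1 + ε / 4 ≤ y' + ll A M * VV M n - ll A M * VV M (n + 1) ∧
    y' + ll A M * VV M n - ll A M * VV M (n + 1) ≤ 1 := by constructor <;> linarith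
  rcases Int.even_or_odd' n with ⟨e', rfl | rfl⟩
  · obtain ⟨E0', E1'⟩ := lVV_even (M := M) hA0 e'
    rw [← hD] at E1'
    by_cases hjj : jj M e = jj M e'
    · have hne : e % (M : ℤ) ^ 2 ≠ e' % (M : ℤ) ^ 2 := by
        intro h
        rw [VV_even, ← h, ← VV_even] at hb''
        rw [hb'] at hb''
        exact Bool.false_ne_true hb''
      have hang := piD_dist_ge_angular (θ + ww q M) Y (θ' + ww q M)
        (y' + ll A M * VV M (2 * e') - ll A M * VV M (2 * e' + 1)) (Real.sqrt (ε / 8))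
        (1 / (2 * q * M)) (Real.sqrt_nonneg _) (by positivity)
        (by rw [Real.sq_sqrt (by positivity)]; linarith)
        (by rw [Real.sq_sqrt (by positivity)]; linarith)
        (fun k => by
          have := ang_sep C.hq0 C.hρb hjj hne hθ hθ' k
          rw [show θ + ww q M - (θ' + ww q M) - k = θ - θ' - k by ring]
          exact this)
      rw [dist_eq_norm]
      refine le_trans ?_ hang
      have hc : cc q A ε ≤ 2 * Real.sqrt (ε / 8) / q := min_le_right _ _
      calc cc q A ε / M ≤ 2 * Real.sqrt (ε / 8) / q / M := by gcongr
        _ = _ := by field_simp; norm_num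
    · apply key _ _ _ hYr'.1 hYr'.2
      rw [lVV_odd hA0 e', ← hD]
      rcases lt_or_gt_of_ne hjj with h | h
      · have : (jj M e : ℝ) + 1 ≤ jj M e' := by exact_mod_cast h
        have := mul_le_mul_of_nonneg_right this hD0.le
        rw [le_abs]; left
        linarith
      · have : (jj M e' : ℝ) + 1 ≤ jj M e := by exact_mod_cast h
        have := mul_le_mul_of_nonneg_right this hD0.le
        rw [le_abs]; right
        linarith
  · apply key _ _ _ hYr'.1 hYr'.2
    rw [lVV_odd hA0 e', ← hD, show 2 * e' + 1 + 1 = 2 * (e' + 1) by ring]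
    obtain ⟨E0', E1'⟩ := lVV_even (M := M) hA0 (e' + 1)
    rw [← hD] at E1'
    have j0' : (0 : ℝ) ≤ jj M e' := by exact_mod_cast jj_nonneg M e'
    have jD' : 0 ≤ (jj M e' : ℝ) * D := by positivity
    rw [le_abs]; right
    linarith

lemma sep_codes {q A M : ℕ} [NeZero M] {ε ρ ρb : ℝ} {a b : ℝ → ℝ} (C : Cfg q A M ε ρ ρb a b)
    (hρb' : ρb < 1 / 2) (hclose : ∀ x, ‖gm a b x - x‖ ≤ 1)
    {y y' : ℝ} {m0 : ℤ} {v v' : ℕ} (hv : v < RR M) (hv' : v' < RR M)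
    (hy : y ∈ gI (ll A M) ρ ((RR M : ℤ) * m0 + v)) (hy1 : -1 + ε / 2 ≤ y) (hy2 : y ≤ 1 - ε / 2)
    (hy' : y' ∈ gI (ll A M) ρ ((RR M : ℤ) * m0 + v')) (hy1' : -1 + ε / 2 ≤ y')
    (hy2' : y' ≤ 1 - ε / 2) (T : Finset (ZMod (M ^ 2)))
    (hT : ∀ z ∈ T, code M v z = true ∧ code M v' z = false) :
    ∃ f : E2 → ℝ, LipschitzWith 1 f ∧
      (q * T.card : ℝ) * (ww q M * (1 - 2 * ρb)) * (cc q A ε / M) - 8 * ρb ≤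
        (∫ θ in Set.Icc (0 : ℝ) 1, f (gm a b (piD θ y))) -
          ∫ θ in Set.Icc (0 : ℝ) 1, f (gm a b (piD θ y')) := by
  classical
  have hM := NeZero.pos M
  have hN : 0 < M ^ 2 := by positivity
  have hq := C.hq0
  have hgc : Continuous (gm a b) := (gm_contDiff C.good).continuous
  have hε0 : 0 < ε := by have := C.good.pos; have := C.hA; linarith
  let φ : ℕ × ZMod (M ^ 2) → ℤ := fun p =>
    2 * ((p.1 : ℤ) * (M : ℤ) ^ 2 + ((p.2 - (m0 : ZMod (M ^ 2))).val : ℤ))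
  have hval : ∀ z : ZMod (M ^ 2), (0 : ℤ) ≤ (z.val : ℤ) ∧ (z.val : ℤ) < (M : ℤ) ^ 2 := fun z =>
    ⟨by positivity, by exact_mod_cast ZMod.val_lt z⟩
  have hmod : ∀ p : ℕ × ZMod (M ^ 2), ((p.1 : ℤ) * (M : ℤ) ^ 2 +
      ((p.2 - (m0 : ZMod (M ^ 2))).val : ℤ)) % (M : ℤ) ^ 2 = ((p.2 - (m0 : ZMod (M ^ 2))).val : ℤ) := by
    intro p
    rw [add_comm, Int.add_mul_emod_self_right]
    exact Int.emod_eq_of_lt (hval _).1 (hval _).2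
  have hinj : Function.Injective φ := by
    intro p p' h
    have h1 : (p.1 : ℤ) * (M : ℤ) ^ 2 + ((p.2 - (m0 : ZMod (M ^ 2))).val : ℤ) =
      (p'.1 : ℤ) * (M : ℤ) ^ 2 + ((p'.2 - (m0 : ZMod (M ^ 2))).val : ℤ) :=
      mul_left_cancel₀ two_ne_zero h
    have h2 : ((p.2 - (m0 : ZMod (M ^ 2))).val : ℤ) = ((p'.2 - (m0 : ZMod (M ^ 2))).val : ℤ) := by
      rw [← hmod p, ← hmod p', h1]
    have h3 : p.2 = p'.2 := by
      have : (p.2 - (m0 : ZMod (M ^ 2))).val = (p'.2 - (m0 : ZMod (M ^ 2))).val := by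
        exact_mod_cast h2
      exact sub_left_injective (ZMod.val_injective _ this)
    rw [h2] at h1
    have h4 : (p.1 : ℤ) = p'.1 :=
      mul_right_cancel₀ (by positivity : ((M : ℤ) ^ 2) ≠ 0) (add_right_cancel h1)
    exact Prod.ext (by exact_mod_cast h4) h3
  set P : Finset ℤ := (Finset.range q ×ˢ T).image φ with hP
  have hPc : (P.card : ℝ) = q * T.card := by
    rw [hP, Finset.card_image_of_injective _ hinj, Finset.card_product, Finset.card_range]
    push_cast; rfl
  have hJ : 0 < 2 * M ^ 2 * q := by positivity
  obtain ⟨f, hf, hfI⟩ := int_sep (2 * M ^ 2 * q) hJ ρb (cc q A ε / M) C.hρb hρb'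
    (by
      have : 0 ≤ cc q A ε := by unfold cc; positivity
      positivity)
    (fun θ => gm a b (piD θ y)) (fun θ => gm a b (piD θ y'))
    (hgc.comp (piD_continuous y)) (hgc.comp (piD_continuous y'))
    (by
      intro t
      have h1 := hclose (piD t y')
      have h2 : ‖piD t y'‖ ≤ 1 := by
        rw [piD_norm]; exact Real.sqrt_le_one.mpr (by linarith)
      have h3 := norm_sub_norm_le (gm a b (piD t y')) (piD t y')
      linarith)
    P
    (by
      intro n hn
      rw [hP, Finset.mem_image] at hn
      obtain ⟨⟨k, z⟩, hkz, rfl⟩ := hn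
      rw [Finset.mem_product, Finset.mem_range] at hkz
      rw [Finset.mem_Ico]
      have h1 := hval (z - (m0 : ZMod (M ^ 2)))
      have h2 : (k : ℤ) + 1 ≤ q := by exact_mod_cast hkz.1
      have h3 : (0 : ℤ) < (M : ℤ) ^ 2 := by positivity
      constructor
      · simp only [φ]; have := h1.1; positivity
      · simp only [φ]; push_cast; nlinarith [h1.2])
    (by
      intro n hn θ hθ k _ t ht
      rw [hP, Finset.mem_image] at hn
      obtain ⟨⟨i, z⟩, hkz, rfl⟩ := hn
      rw [Finset.mem_product, Finset.mem_range] at hkz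
      obtain ⟨hz1, hz2⟩ := hT z hkz.2
      have hcast : ((m0 + ((z - (m0 : ZMod (M ^ 2))).val : ℤ) : ℤ) : ZMod (M ^ 2)) = z := by
        push_cast
        rw [ZMod.natCast_zmod_val]; ring
      have hVV : VV M (φ (i, z)) = (RR M : ℤ) * ((z - (m0 : ZMod (M ^ 2))).val : ℤ) := by
        simp only [φ]
        rw [VV_even, hmod (i, z)]
      refine sep C hv hv' hy hy1 hy2 hy' hy1' hy2' hθ ht ?_ ?_
      · change bit M ((RR M : ℤ) * m0 + v + VV M (φ (i, z))) = true
        rw [hVV, bit_eq M m0 _ v hv, hcast, hz1]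
      · change bit M ((RR M : ℤ) * m0 + v' + VV M (φ (i, z))) = false
        rw [hVV, bit_eq M m0 _ v' hv', hcast, hz2])
  refine ⟨f, hf, ?_⟩
  rw [hPc] at hfI
  exact hfI

lemma ham_lt {q A M : ℕ} [NeZero M] {ε ρ ρb : ℝ} {a b : ℝ → ℝ} (C : Cfg q A M ε ρ ρb a b)
    (hρb' : ρb ≤ cc q A ε / M / 1000) (hclose : ∀ x, ‖gm a b x - x‖ ≤ 1)
    {y y' : ℝ} {m0 : ℤ} {v v' : ℕ} (hv : v < RR M) (hv' : v' < RR M)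
    (hy : y ∈ gI (ll A M) ρ ((RR M : ℤ) * m0 + v)) (hy1 : -1 + ε / 2 ≤ y) (hy2 : y ≤ 1 - ε / 2)
    (hy' : y' ∈ gI (ll A M) ρ ((RR M : ℤ) * m0 + v')) (hy1' : -1 + ε / 2 ≤ y')
    (hy2' : y' ≤ 1 - ε / 2)
    (hI : ∀ f : E2 → ℝ, LipschitzWith 1 f →
      |(∫ θ in Set.Icc (0 : ℝ) 1, f (gm a b (piD θ y))) -
          ∫ θ in Set.Icc (0 : ℝ) 1, f (gm a b (piD θ y'))| ≤ cc q A ε / M / 85) :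
    4 * (Finset.univ.filter fun z => code M v z ≠ code M v' z).card < M ^ 2 := by
  classical
  by_contra hc
  push Not at hc
  set h := cc q A ε / M with hh
  have hMr : (1 : ℝ) ≤ M := by exact_mod_cast NeZero.pos M
  have hA' : (1 : ℝ) ≤ A := by exact_mod_cast C.hA0
  have hq' : (0 : ℝ) < q := by exact_mod_cast C.hq0
  have hρb := C.hρb
  have hh0 : 0 < h := by linarith
  have hh1 : h ≤ 1 := by
    have h1 : cc q A ε ≤ 1 := by
      refine (min_le_left _ _).trans ?_
      rw [div_le_one (by positivity)]; linarith
    rw [hh, div_le_one (by positivity)]; linarith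
  set T1 := Finset.univ.filter fun z => code M v z = true ∧ code M v' z = false with hT1
  set T2 := Finset.univ.filter fun z => code M v' z = true ∧ code M v z = false with hT2
  have hsub : (Finset.univ.filter fun z => code M v z ≠ code M v' z) ⊆ T1 ∪ T2 := by
    intro z hz
    simp only [hT1, hT2, Finset.mem_union, Finset.mem_filter, Finset.mem_univ, true_and] at hz ⊢
    cases h1 : code M v z <;> cases h2 : code M v' z <;> simp_all
  have hcard := (Finset.card_le_card hsub).trans (Finset.card_union_le _ _)
  have fin : ∀ T : Finset (ZMod (M ^ 2)), M ^ 2 ≤ 8 * T.card →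
      h / 85 < (q * T.card : ℝ) * (ww q M * (1 - 2 * ρb)) * h - 8 * ρb := by
    intro T hT
    have hT' : (M : ℝ) ^ 2 ≤ 8 * T.card := by exact_mod_cast hT
    have e : (1 : ℝ) / 16 ≤ q * T.card * ww q M := by
      unfold ww
      push_cast
      rw [mul_one_div, div_le_div_iff₀ (by norm_num) (by positivity)]
      nlinarith
    have h2 : (1 : ℝ) / 16 * (99 / 100) * h ≤ (q * T.card : ℝ) * (ww q M * (1 - 2 * ρb)) * h := by
      rw [← mul_assoc]
      have : (99 / 100 : ℝ) ≤ 1 - 2 * ρb := by linarith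
      gcongr
    linarith
  have hb2 : ρb < 1 / 2 := by linarith
  rcases le_total (M ^ 2) (8 * T1.card) with ht | ht
  · obtain ⟨f, hf, hfI⟩ := sep_codes C hb2 hclose hv hv' hy hy1 hy2 hy' hy1' hy2' T1
      (fun z hz => (Finset.mem_filter.mp hz).2)
    have := (le_abs_self _).trans (hI f hf)
    have := fin T1 ht
    linarith
  · obtain ⟨f, hf, hfI⟩ := sep_codes C hb2 hclose hv' hv hy' hy1' hy2' hy hy1 hy2 T2
      (fun z hz => (Finset.mem_filter.mp hz).2)
    have := (neg_abs_le _).trans' (neg_le_neg (hI f hf))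
    have := fin T2 (by omega)
    linarith

lemma exists_cfg (q A M : ℕ) [NeZero M] (ε ρ ρb : ℝ) (hq : 0 < q) (hA0 : 0 < A)
    (hA : (1 : ℝ) / A ≤ ε / 16) (hε : ε ≤ 1) (hρ : 0 < ρ) (hρ' : ρ < 1 / 2) (hρb : 0 < ρb)
    (hρb' : ρb < 1 / 2) :
    ∃ a b : ℝ → ℝ, Cfg q A M ε ρ ρb a b ∧ (∀ z, |a z| ≤ ww q M) ∧ ∀ t, b (t + 1 / q) = b t := by
  classical
  have hA' : (0 : ℝ) < A := by exact_mod_cast hA0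
  have hAi : (0 : ℝ) < 1 / A := by positivity
  have hw := ww_pos (M := M) hq
  have hl := ll_pos (M := M) hA0
  have hM0 : (0 : ℝ) < M := by exact_mod_cast NeZero.pos M
  have hq' : (0 : ℝ) < q := by exact_mod_cast hq
  have hlA : ll A M ≤ 1 / A := by
    unfold ll KK
    apply one_div_le_one_div_of_le hA'
    push_cast
    have h1 : (1 : ℝ) ≤ M := by exact_mod_cast NeZero.pos M
    have h2 : (1 : ℝ) ≤ RR M := by exact_mod_cast RR_pos M
    have : (1 : ℝ) ≤ M * RR M * M ^ 2 * 8 := by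
      have := one_le_mul_of_one_le_of_one_le h1 h2
      have := one_le_mul_of_one_le_of_one_le this (one_le_pow₀ h1 (n := 2))
      linarith
    nlinarith
  obtain ⟨φb, sb, cb, vb, pb⟩ := smooth_step (ww q M) ρb hw hρb hρb' (fun n => ll A M * VV M n)
  obtain ⟨φa, sa, ca, va, -⟩ := smooth_step (ll A M) ρ hl hρ hρ'
    (fun n => if (-1 + ε / 4 ≤ ll A M * n ∧ ll A M * n ≤ 1 - ε / 4) ∧ bit M n = true
      then ww q M else 0)
  have hperq : ∀ t, φb (t + 1 / q) = φb t := by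
    intro t
    have h1 := pb (2 * (M : ℤ) ^ 2) (fun n => by rw [VV_per]) t
    have h2 : ww q M * ((2 * (M : ℤ) ^ 2 : ℤ) : ℝ) = 1 / q := by
      unfold ww; push_cast; field_simp
    rw [h2] at h1
    exact h1
  have hper1 : ∀ t, φb (t + 1) = φb t := by
    intro t
    have := Function.Periodic.nat_mul (f := φb) (c := 1 / (q : ℝ)) hperq q t
    rw [mul_one_div_cancel hq'.ne'] at this
    exact this
  have hfl : ∀ z, ll A M * ⌊z / ll A M⌋ ≤ z ∧ z < ll A M * ⌊z / ll A M⌋ + ll A M := by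
    intro z
    have h1 := Int.floor_le (z / ll A M)
    have h2 := Int.lt_floor_add_one (z / ll A M)
    rw [le_div_iff₀ hl] at h1
    rw [div_lt_iff₀ hl] at h2
    constructor <;> linarith
  refine ⟨φa, φb, ?_, ?_, hperq⟩
  · refine ⟨⟨hAi, sa, sb, ?_, ?_, hper1, ?_, ?_⟩, hA, hA0, hq, hε, hρb, hρ, ?_, ?_⟩
    · intro t
      obtain ⟨c, c0, c1, e⟩ := cb t
      rw [e]
      exact mul_nonneg (lVV_le hA0 _).1 c0
    · intro t
      obtain ⟨c, c0, c1, e⟩ := cb t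
      rw [e]
      have := lVV_le (M := M) hA0 ⌊t / ww q M⌋
      nlinarith
    · intro z hz
      obtain ⟨c, c0, c1, e⟩ := ca z
      rw [e, if_neg, zero_mul]
      rintro ⟨⟨h1, h2⟩, -⟩
      have := hfl z
      linarith
    · intro z hz
      obtain ⟨c, c0, c1, e⟩ := ca z
      rw [e, if_neg, zero_mul]
      rintro ⟨⟨h1, h2⟩, -⟩
      have := hfl z
      linarith
    · intro n θ hθ
      exact vb n θ hθ.1 hθ.2
    · intro n z hz h1 h2
      rw [va n z hz.1 hz.2]
      have hz' := mem_gI.mp hz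
      have : ll A M * ρ ≤ ll A M * (1 / 2) := by gcongr
      have : 0 ≤ ll A M * ρ := by positivity
      have hr : -1 + ε / 4 ≤ ll A M * n ∧ ll A M * n ≤ 1 - ε / 4 := by
        constructor <;> linarith
      simp only [hr, and_self, true_and]
  · intro z
    obtain ⟨c, c0, c1, e⟩ := ca z
    rw [e]
    split_ifs
    · rw [abs_of_nonneg (by positivity)]; nlinarith
    · rw [zero_mul, abs_zero]; exact hw.le

lemma int_bounds (F : ℝ → ℝ) (hF : Continuous F) (l u : ℝ) (hl : ∀ t, l ≤ F t) (hu : ∀ t, F t ≤ u) :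
    l ≤ ∫ t in Set.Icc (0 : ℝ) 1, F t ∧ ∫ t in Set.Icc (0 : ℝ) 1, F t ≤ u := by
  have hi : IntegrableOn F (Set.Icc 0 1) := hF.continuousOn.integrableOn_compact isCompact_Icc
  have hc : ∀ c : ℝ, ∫ _ in Set.Icc (0 : ℝ) 1, c = c := by
    intro c; simp
  have ic : ∀ c : ℝ, IntegrableOn (fun _ : ℝ => c) (Set.Icc (0 : ℝ) 1) := fun c =>
    continuous_const.continuousOn.integrableOn_compact isCompact_Icc
  constructor
  · conv_lhs => rw [← hc l]
    exact setIntegral_mono_on (ic l) hi measurableSet_Icc fun t _ => hl t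
  · conv_rhs => rw [← hc u]
    exact setIntegral_mono_on hi (ic u) measurableSet_Icc fun t _ => hu t

lemma radius_sep (g : E2 → E2) (hg : Continuous g) (ε : ℝ) (hε : 0 < ε)
    (hc : ∀ x, ‖g x - x‖ ≤ ε / 32) (y y' : ℝ) (h1 : -1 ≤ y) (h2 : y ≤ 1) (h1' : -1 ≤ y') (h2' : y' ≤ 1)
    (hd : y + ε / 2 ≤ y') :
    ε / 16 ≤ (∫ θ in Set.Icc (0 : ℝ) 1, ‖g (piD θ y')‖) - ∫ θ in Set.Icc (0 : ℝ) 1, ‖g (piD θ y)‖ := by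
  have key : ∀ y θ, Real.sqrt ((1 + y) / 2) - ε / 32 ≤ ‖g (piD θ y)‖ ∧
      ‖g (piD θ y)‖ ≤ Real.sqrt ((1 + y) / 2) + ε / 32 := by
    intro y θ
    have a1 := hc (piD θ y)
    have a2 := abs_le.mp (abs_norm_sub_norm_le (g (piD θ y)) (piD θ y))
    rw [piD_norm] at a2
    constructor <;> linarith [a2.1, a2.2]
  have b1 := int_bounds (fun θ => ‖g (piD θ y)‖) ((hg.comp (piD_continuous y)).norm) _ _
    (fun t => (key y t).1) (fun t => (key y t).2)
  have b2 := int_bounds (fun θ => ‖g (piD θ y')‖) ((hg.comp (piD_continuous y')).norm) _ _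
    (fun t => (key y' t).1) (fun t => (key y' t).2)
  have r0 := Real.sqrt_nonneg ((1 + y) / 2)
  have r0' := Real.sqrt_nonneg ((1 + y') / 2)
  have r1 : Real.sqrt ((1 + y) / 2) ≤ 1 := Real.sqrt_le_one.mpr (by linarith)
  have r1' : Real.sqrt ((1 + y') / 2) ≤ 1 := Real.sqrt_le_one.mpr (by linarith)
  have s := Real.sq_sqrt (show 0 ≤ (1 + y) / 2 by linarith)
  have s' := Real.sq_sqrt (show 0 ≤ (1 + y') / 2 by linarith)
  set r := Real.sqrt ((1 + y) / 2)
  set r' := Real.sqrt ((1 + y') / 2)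
  have hpr : ε / 4 ≤ (r' - r) * (r' + r) := by nlinarith
  have : ε / 8 ≤ r' - r := by
    by_contra hcon
    push Not at hcon
    have : (r' - r) * (r' + r) ≤ ε / 8 * (r' + r) :=
      mul_le_mul_of_nonneg_right hcon.le (by linarith)
    have : ε / 8 * (r' + r) ≤ ε / 8 * 2 := by gcongr; linarith
    have hs : r' + r = 2 := by nlinarith
    rw [hs] at hpr
    linarith
  linarith [b1.2, b2.1]

lemma exists_M (q : ℕ) (hq : 0 < q) (ε c η₁ : ℝ) (hε : 0 < ε) (hc : 0 < c) (hη₁ : 0 < η₁) :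
    ∃ M : ℕ, 0 < M ∧ 2 * Real.pi * ww q M ≤ ε / 64 ∧ c / M / 512 < η₁ ∧
      2 * (25 / 28 : ℝ) ^ (M ^ 2) ≤ Real.exp (-(c / M / 512) ^ (-2 + ε)) := by
  have hq' : (1 : ℝ) ≤ q := by exact_mod_cast hq
  have hpi := Real.pi_pos
  set L := Real.log (28 / 25) with hL
  have hL0 : 0 < L := Real.log_pos (by norm_num)
  set C1 := (c / 512) ^ (-2 + ε) with hC1
  have hC10 : 0 < C1 := by positivity
  have hnat : Filter.Tendsto (fun M : ℕ => (M : ℝ)) Filter.atTop Filter.atTop :=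
    tendsto_natCast_atTop_atTop
  have t1 : ∀ᶠ M : ℕ in Filter.atTop, (64 * Real.pi / ε + c / 512 / η₁ + 1 + 2 * Real.log 2 / L + 1) ≤ (M : ℝ) :=
    hnat.eventually_ge_atTop _
  have t2 : Filter.Tendsto (fun M : ℕ => C1 * (M : ℝ) ^ (-ε)) Filter.atTop (nhds (C1 * 0)) :=
    ((tendsto_rpow_neg_atTop hε).comp hnat).const_mul C1
  rw [mul_zero] at t2
  have t3 : ∀ᶠ M : ℕ in Filter.atTop, C1 * (M : ℝ) ^ (-ε) < L / 2 :=
    t2.eventually (gt_mem_nhds (by positivity))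
  obtain ⟨M, h1, h3⟩ := (t1.and t3).exists
  have hlog2 : 0 < Real.log 2 := Real.log_pos (by norm_num)
  have p1 : 0 < 64 * Real.pi / ε := by positivity
  have p2 : 0 < c / 512 / η₁ := by positivity
  have p3 : 0 < 2 * Real.log 2 / L := by positivity
  have hM1 : (1 : ℝ) ≤ M := by linarith
  have hM0 : (0 : ℝ) < M := by linarith
  have hMM : (M : ℝ) ≤ M ^ 2 := by nlinarith
  refine ⟨M, by exact_mod_cast hM0, ?_, ?_, ?_⟩
  · have h4 : 64 * Real.pi / ε ≤ M := by linarith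
    rw [div_le_iff₀ hε] at h4
    unfold ww
    push_cast
    rw [mul_one_div, div_le_div_iff₀ (by positivity) (by norm_num)]
    have : (M : ℝ) * 1 ≤ M ^ 2 * q := by
      apply mul_le_mul hMM hq' (by norm_num) (by positivity)
    nlinarith
  · have h4 : c / 512 / η₁ < M := by linarith
    rw [div_lt_iff₀ hη₁] at h4
    rw [div_right_comm, div_lt_iff₀ hM0]; linarith
  · have e1 : (c / M / 512) ^ (-2 + ε) = C1 * (M : ℝ) ^ (-ε) * M ^ 2 := by
      rw [div_right_comm, Real.div_rpow (by positivity) hM0.le, ← hC1, mul_assoc, div_eq_mul_inv,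
        ← Real.rpow_neg hM0.le, ← Real.rpow_natCast, ← Real.rpow_add hM0]
      congr 2; push_cast; ring
    have e2 : 2 * (25 / 28 : ℝ) ^ (M ^ 2) = Real.exp (Real.log 2 - M ^ 2 * L) := by
      rw [Real.exp_sub, Real.exp_log (by norm_num), hL,
        show (M : ℝ) ^ 2 * Real.log (28 / 25) = ((M ^ 2 : ℕ) : ℝ) * Real.log (28 / 25) by push_cast; rfl,
        Real.exp_nat_mul, Real.exp_log (by norm_num),
        show (28 / 25 : ℝ) = (25 / 28)⁻¹ by norm_num, inv_pow, div_inv_eq_mul]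
    rw [e1, e2]
    apply Real.exp_le_exp.mpr
    have h5 : C1 * (M : ℝ) ^ (-ε) * M ^ 2 ≤ L / 2 * M ^ 2 := by gcongr
    have h6 : 2 * Real.log 2 / L ≤ M := by linarith
    rw [div_le_iff₀ hL0] at h6
    nlinarith

/-- **Corollary 4.2 (disk case): the emergence lemma on the disk.** There is `ε₀ > 0` such that
for every `ε ∈ (0, ε₀)`, `q ≥ 1` and `η₁ > 0`, there are `η ∈ (0, η₁)` and a `C^∞`, Lebesgue
measure-preserving diffeomorphism `g` of `ℝ²`, equal to the identity outside a compact subset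
of the punctured open unit disk, commuting with the rotation by `2π/q` about the origin,
`ε`-`C⁰`-close to the identity together with its inverse, and such that for every
`y ∈ [−1+ε, 1−ε]`, the normalized measure of the set of heights `y'` with
`d_K(g_*μ_y, g_*μ_{y'}) ≤ 3η` is at most `exp(−η^{−2+ε})`. -/
theorem disk_emergence_lemma :
    ∃ ε₀ > (0 : ℝ), ∀ ε : ℝ, 0 < ε → ε < ε₀ → ∀ q : ℕ, 1 ≤ q → ∀ η₁ : ℝ, 0 < η₁ →
      ∃ η : ℝ, 0 < η ∧ η < η₁ ∧
      ∃ g : EuclideanSpace ℝ (Fin 2) ≃ EuclideanSpace ℝ (Fin 2),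
        ContDiff ℝ (⊤ : ℕ∞) ⇑g ∧ ContDiff ℝ (⊤ : ℕ∞) ⇑g.symm ∧
        MeasurePreserving g volume volume ∧
        (∃ K : Set (EuclideanSpace ℝ (Fin 2)), IsCompact K ∧
          K ⊆ {x : EuclideanSpace ℝ (Fin 2) | 0 < ‖x‖ ∧ ‖x‖ < 1} ∧
          ∀ x ∉ K, g x = x) ∧
        (∀ x : EuclideanSpace ℝ (Fin 2), g (rotO (1 / q) x) = rotO (1 / q) (g x)) ∧
        (∀ x : EuclideanSpace ℝ (Fin 2), ‖g x - x‖ ≤ ε ∧ ‖g.symm x - x‖ ≤ ε) ∧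
        ∀ y ∈ Set.Icc (-1 + ε) (1 - ε),
          (1 / 2 : ℝ≥0∞) * (volume : Measure ℝ) {y' ∈ Set.Icc (-1 : ℝ) 1 |
              ∀ f : EuclideanSpace ℝ (Fin 2) → ℝ, LipschitzWith 1 f →
                (∫ x, f x ∂(Measure.map g (diskCircleMeasure y))) -
                    (∫ x, f x ∂(Measure.map g (diskCircleMeasure y'))) ≤ 3 * η} ≤
            ENNReal.ofReal (Real.exp (-η ^ (-2 + ε))) := by
  refine ⟨1, one_pos, fun ε hε0 hε1 q hq η₁ hη₁ => ?_⟩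
  have hq' : (0 : ℝ) < q := by exact_mod_cast hq
  obtain ⟨A, hA⟩ := exists_nat_ge (2048 / ε ^ 2)
  have hA' : (0 : ℝ) < A := lt_of_lt_of_le (by positivity) hA
  have hA0 : 0 < A := by exact_mod_cast hA'
  have hδ : (1 : ℝ) / A ≤ ε ^ 2 / 2048 := by
    rw [div_le_iff₀ (by positivity)] at hA
    rw [div_le_div_iff₀ hA' (by norm_num)]
    linarith
  have hδ2 : (1 : ℝ) / A ≤ ε / 16 := by nlinarith
  set c := cc q A ε with hc
  have hc0 : 0 < c := by
    rw [hc, cc]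
    have : 0 < Real.sqrt (ε / 8) := Real.sqrt_pos.mpr (by positivity)
    positivity
  obtain ⟨M, hM0, hMw, hMη, hMe⟩ := exists_M q hq ε c η₁ hε0 hc0 hη₁
  have : NeZero M := ⟨hM0.ne'⟩
  have : NeZero A := ⟨hA0.ne'⟩
  have hMr : (1 : ℝ) ≤ M := by exact_mod_cast hM0
  set h := c / M with hh
  have hh0 : 0 < h := by positivity
  have hhε : h ≤ ε / 16 := by
    have h1 : c ≤ 1 / (8 * A) := min_le_left _ _
    have h2 : (1 : ℝ) / (8 * A) = 1 / A / 8 := by field_simp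
    have h3 : h ≤ c := div_le_self hc0.le hMr
    linarith
  set x : ℝ := (25 / 28) ^ (M ^ 2) with hx
  have hx0 : 0 < x := by positivity
  have hx1 : x ≤ 1 := pow_le_one₀ (by norm_num) (by norm_num)
  obtain ⟨a, b, C, ha, hbper⟩ := exists_cfg q A M ε (x / 4) (h / 1000) hq hA0 hδ2 hε1.le
    (by linarith) (by linarith) (by linarith) (by linarith)
  have hsq : Real.sqrt (1 / A / 2) ≤ ε / 64 := by
    apply Real.sqrt_le_iff.mpr
    constructor
    · positivity
    · nlinarith
  have hcl : ∀ z, ‖gm a b z - z‖ ≤ ε / 32 := by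
    intro z
    have := gm_close C.good ha z
    linarith
  have hcl' : ∀ z, ‖gm (fun z => -a z) b z - z‖ ≤ ε / 32 := by
    intro z
    have := gm_close C.good.neg (fun z => by rw [abs_neg]; exact ha z) z
    linarith
  have hgc : Continuous (gm a b) := (gm_contDiff C.good).continuous
  refine ⟨h / 512, by linarith, hMη, gmE C.good, gm_contDiff C.good, gm_contDiff C.good.neg,
    gm_measurePreserving C.good, gm_support C.good, gm_rot C.good hbper,
    fun z => ⟨(hcl z).trans (by linarith), (hcl' z).trans (by linarith)⟩, ?_⟩
  intro y hy
  have hcoe : (⇑(gmE C.good) : E2 → E2) = gm a b := rfl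
  rw [hcoe]
  set S := {y' ∈ Set.Icc (-1 : ℝ) 1 | ∀ f : EuclideanSpace ℝ (Fin 2) → ℝ, LipschitzWith 1 f →
                (∫ x, f x ∂(Measure.map (gm a b) (diskCircleMeasure y))) -
                    (∫ x, f x ∂(Measure.map (gm a b) (diskCircleMeasure y'))) ≤ 3 * (h / 512)}
    with hS
  -- two-sided bound
  have hS2 : ∀ y' ∈ S, ∀ f : E2 → ℝ, LipschitzWith 1 f →
      |(∫ θ in Set.Icc (0 : ℝ) 1, f (gm a b (piD θ y))) -
          ∫ θ in Set.Icc (0 : ℝ) 1, f (gm a b (piD θ y'))| ≤ 3 * (h / 512) := by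
    intro y' hy' f hf
    have h1 := hy'.2 f hf
    have h2 := hy'.2 (fun x => -f x) hf.neg
    rw [integral_circle _ hgc f hf, integral_circle _ hgc f hf] at h1
    simp only [integral_neg] at h2
    rw [integral_circle _ hgc f hf, integral_circle _ hgc f hf] at h2
    rw [abs_le]
    constructor <;> linarith
  have hnorm : LipschitzWith 1 (fun x : E2 => ‖x‖) := lipschitzWith_one_norm
  have hS1 : ∀ y' ∈ S, -1 + ε / 2 ≤ y' ∧ y' ≤ 1 - ε / 2 := by
    intro y' hy'
    have hb := abs_le.mp (hS2 y' hy' _ hnorm)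
    constructor
    · by_contra hcon
      push Not at hcon
      have := radius_sep (gm a b) hgc ε hε0 hcl y' y hy'.1.1 hy'.1.2 (by linarith [hy.1])
        (by linarith [hy.2]) (by linarith [hy.1])
      linarith [hb.2]
    · by_contra hcon
      push Not at hcon
      have := radius_sep (gm a b) hgc ε hε0 hcl y y' (by linarith [hy.1]) (by linarith [hy.2])
        hy'.1.1 hy'.1.2 (by linarith [hy.2])
      linarith [hb.1]
  have hvol : volume S ≤ ENNReal.ofReal (4 * (x / 4) + 2 * (25 / 28) ^ (M ^ 2)) := by
    apply measure_S A M (x / 4) (by linarith) S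
    · intro y' hy'
      have := hS1 y' hy'
      constructor <;> linarith
    · intro y1 hy1 y2 hy2 m0 w w' hw hw' hg1 hg2
      refine ham_lt C le_rfl (fun z => (hcl z).trans (by linarith)) hw hw' hg1 (hS1 y1 hy1).1
        (hS1 y1 hy1).2 hg2 (hS1 y2 hy2).1 (hS1 y2 hy2).2 ?_
      intro f hf
      have h1 := abs_le.mp (hS2 y1 hy1 f hf)
      have h2 := abs_le.mp (hS2 y2 hy2 f hf)
      rw [← hc, ← hh, abs_le]
      constructor <;> linarith [h1.1, h1.2, h2.1, h2.2]
  rw [← hx] at hvol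
  calc (1 / 2 : ℝ≥0∞) * volume S ≤ (1 / 2 : ℝ≥0∞) * ENNReal.ofReal (4 * (x / 4) + 2 * x) := by gcongr
    _ = ENNReal.ofReal (1 / 2) * ENNReal.ofReal (4 * (x / 4) + 2 * x) := by
      congr 1
      rw [ENNReal.ofReal_div_of_pos (by norm_num)]; simp
    _ = ENNReal.ofReal (1 / 2 * (4 * (x / 4) + 2 * x)) := by
      rw [ENNReal.ofReal_mul (by norm_num)]
    _ ≤ _ := by
      apply ENNReal.ofReal_le_ofReal
      linarith
end

section
/- Let H : ℝ² → ℝ² be a homeomorphism that preserves 2-dimensional Lebesgue measure, satisfies H(x+1, y) = H(x, y) + (1, 0) for all (x,y), and equals the identity whenever |y| ≥ 1 (so H is the lift of an area-preserving homeomorphism of the cylinder (ℝ/ℤ)×[−1,1] equal to the identity on the boundary). Then for every ε > 0 and every integer q ≥ 1, there exists a measure-preserving C^∞ diffeomorphism H̃ : ℝ² → ℝ² with H̃(x + 1/q, y) = H̃(x, y) + (1/q, 0) for all (x,y) and H̃ = id whenever |y| ≥ 1 − δ for some δ > 0, such that the composition Ĥ := H ∘ H̃ satisfies: for every y ∈ [−1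 + ε/8, 1 − ε/8] and every 1-Lipschitz function φ : ℝ² → ℝ with φ(x+1, s) = φ(x, s) for all (x,s), |∫₀¹ φ(Ĥ(t, y)) dt − (1/2)∫_{−1}^{1} ∫₀¹ φ(t, s) dt ds| ≤ ε/8. (The key construction step in Proposition 3.2: composing a given conjugacy with a Lemma 3.1 map sends almost every horizontal circle measure ε/8-close to the area measure in the Kantorovich distance.) -/
open MeasureTheory

/-- The Euclidean distance on the plane `ℝ × ℝ`. -/
noncomputable def euclDist (a b : ℝ × ℝ) : ℝ :=
  Real.sqrt ((a.1 - b.1) ^ 2 + (a.2 - b.2) ^ 2)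

section EquiHelpers
open Set
open scoped ContDiff Topology


lemma hasFDerivAt_param {F : Type} [NormedAddCommGroup F] [NormedSpace ℝ F] [CompleteSpace F]
    (f : (ℝ × ℝ) × ℝ → F) (hf : ContDiff ℝ 1 f) (x : ℝ × ℝ) :
    HasFDerivAt (fun x => ∫ t in (0:ℝ)..1, f (x, t))
      (∫ t in (0:ℝ)..1, (fderiv ℝ f (x, t)).comp (ContinuousLinearMap.inl ℝ (ℝ × ℝ) ℝ)) x := by
  have hc : Continuous (fun p : (ℝ × ℝ) × ℝ =>
      (fderiv ℝ f p).comp (ContinuousLinearMap.inl ℝ (ℝ × ℝ) ℝ)) :=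
    (hf.continuous_fderiv (by norm_num)).clm_comp continuous_const
  obtain ⟨C, hC⟩ := ((isCompact_closedBall x 1).prod (isCompact_Icc (a := (0:ℝ)) (b := 1))).exists_bound_of_continuousOn hc.continuousOn
  refine (intervalIntegral.hasFDerivAt_integral_of_dominated_of_fderiv_le (μ := volume) (𝕜 := ℝ)
    (F := fun x t => f (x, t)) (s := Metric.ball x 1)
    (F' := fun x t => (fderiv ℝ f (x, t)).comp (ContinuousLinearMap.inl ℝ (ℝ × ℝ) ℝ))
    (bound := fun _ => C) (Metric.ball_mem_nhds x one_pos) ?_ ?_ ?_ ?_ ?_ ?_)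
  · refine Filter.Eventually.of_forall fun y => ?_
    exact (hf.continuous.comp (by fun_prop : Continuous fun t : ℝ => (y, t))).aestronglyMeasurable
  · exact (hf.continuous.comp (by fun_prop : Continuous fun t : ℝ => (x, t))).intervalIntegrable _ _
  · exact (hc.comp (by fun_prop : Continuous fun t : ℝ => (x, t))).aestronglyMeasurable
  · refine Filter.Eventually.of_forall fun t ht y hy => ?_
    rw [uIoc_of_le zero_le_one] at ht
    exact hC (y, t) ⟨Metric.ball_subset_closedBall hy, ht.1.le, ht.2⟩
  · exact intervalIntegrable_const
  · refine Filter.Eventually.of_forall fun t ht y hy => ?_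
    have h1 : HasFDerivAt f (fderiv ℝ f (y, t)) (y, t) :=
      (hf.differentiable (by norm_num)).differentiableAt.hasFDerivAt
    exact h1.comp y (hasFDerivAt_prodMk_left y t)

lemma contDiff_param_nat (n : ℕ) : ∀ {F : Type} [NormedAddCommGroup F] [NormedSpace ℝ F]
    [CompleteSpace F] (f : (ℝ × ℝ) × ℝ → F) (_ : ContDiff ℝ ∞ f),
    ContDiff ℝ n (fun x => ∫ t in (0:ℝ)..1, f (x, t)) := by
  induction n with
  | zero =>
    intro F _ _ _ f hf
    rw [Nat.cast_zero, contDiff_zero]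
    exact continuous_iff_continuousAt.2 fun x =>
      (hasFDerivAt_param f (hf.of_le (by exact_mod_cast le_top)) x).continuousAt
  | succ n ih =>
    intro F _ _ _ f hf
    have hf1 : ContDiff ℝ 1 f := hf.of_le (by exact_mod_cast le_top)
    have h := fun x => hasFDerivAt_param f hf1 x
    push_cast
    rw [contDiff_succ_iff_fderiv]
    refine ⟨fun x => (h x).differentiableAt, by simp, ?_⟩
    rw [show fderiv ℝ (fun x => ∫ t in (0:ℝ)..1, f (x, t)) = _ from funext fun x => (h x).fderiv]
    exact ih (fun p => (fderiv ℝ f p).comp (ContinuousLinearMap.inl ℝ (ℝ × ℝ) ℝ))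
      ((hf.fderiv_right (by simp)).clm_comp contDiff_const)

lemma contDiff_param (f : (ℝ × ℝ) × ℝ → ℝ) (hf : ContDiff ℝ ∞ f) :
    ContDiff ℝ ∞ (fun x => ∫ t in (0:ℝ)..1, f (x, t)) :=
  contDiff_infty.2 fun n => contDiff_param_nat n f hf

/-- Smooth bijection with positive Jacobian. -/
lemma equiv_jac (e : ℝ × ℝ ≃ ℝ × ℝ) (he : ContDiff ℝ ∞ e) (ρ : ℝ × ℝ → ℝ) (hρ : ∀ z, 0 < ρ z)
    (hdet : ∀ z, (fderiv ℝ e z).det = ρ z) :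
    ContDiff ℝ ∞ e.symm ∧
    Measure.map e (volume.withDensity fun z => ENNReal.ofReal (ρ z)) = volume := by
  have hd : ∀ z, HasFDerivAt e (fderiv ℝ e z) z := fun z =>
    (he.differentiable (by simp)).differentiableAt.hasFDerivAt
  have hunit : ∀ z, (fderiv ℝ e z).det ≠ 0 := fun z => by rw [hdet]; exact (hρ z).ne'
  let f' : ℝ × ℝ → (ℝ × ℝ) ≃L[ℝ] (ℝ × ℝ) := fun z =>
    ContinuousLinearMap.toContinuousLinearEquivOfDetNeZero (fderiv ℝ e z) (hunit z)
  have hf' : ∀ z, (f' z : (ℝ × ℝ) →L[ℝ] (ℝ × ℝ)) = fderiv ℝ e z := fun z => by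
    simp [f']
  have hs : ∀ z, HasStrictFDerivAt e (f' z : (ℝ × ℝ) →L[ℝ] (ℝ × ℝ)) z := fun z => by
    rw [hf']
    exact he.contDiffAt.hasStrictFDerivAt (by simp)
  have hopen : IsOpenMap e := isOpenMap_of_hasStrictFDerivAt_equiv hs
  let h : (ℝ × ℝ) ≃ₜ (ℝ × ℝ) := e.toHomeomorphOfContinuousOpen he.continuous hopen
  refine ⟨Homeomorph.contDiff_symm h (f₀' := f') (fun z => (hs z).hasFDerivAt) he, ?_⟩
  have := map_withDensity_abs_det_fderiv_eq_addHaar (μ := (volume : Measure (ℝ × ℝ))) (s := univ) (f := e)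
    (f' := fun z => fderiv ℝ e z) MeasurableSet.univ.nullMeasurableSet
    (fun z _ => (hd z).hasFDerivWithinAt) e.injective.injOn
  simp only [Measure.restrict_univ, image_univ, e.surjective.range_eq, hdet] at this
  rw [← this]
  congr 2
  ext z
  rw [abs_of_pos (hρ z)]

lemma det_prod (L : ℝ × ℝ →L[ℝ] ℝ × ℝ) :
    L.det = (L (1, 0)).1 * (L (0, 1)).2 - (L (0, 1)).1 * (L (1, 0)).2 := by
  rw [ContinuousLinearMap.det, ← LinearMap.det_toMatrix (Module.Basis.finTwoProd ℝ), Matrix.det_fin_two]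
  simp [LinearMap.toMatrix_apply]


lemma partial_fst (e : ℝ × ℝ → ℝ × ℝ) (he : ContDiff ℝ ∞ e) (x y : ℝ) :
    HasDerivAt (fun t => e (t, y)) (fderiv ℝ e (x, y) (1, 0)) x := by
  have hd : HasFDerivAt e (fderiv ℝ e (x, y)) (x, y) :=
    (he.differentiable (by simp)).differentiableAt.hasFDerivAt
  have h1 : HasDerivAt (fun t : ℝ => (t, y)) ((1 : ℝ), (0 : ℝ)) x :=
    (hasDerivAt_id x).prodMk (hasDerivAt_const x y)
  exact hd.comp_hasDerivAt x h1

lemma partial_snd (e : ℝ × ℝ → ℝ × ℝ) (he : ContDiff ℝ ∞ e) (x y : ℝ) :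
    HasDerivAt (fun t => e (x, t)) (fderiv ℝ e (x, y) (0, 1)) y := by
  have hd : HasFDerivAt e (fderiv ℝ e (x, y)) (x, y) :=
    (he.differentiable (by simp)).differentiableAt.hasFDerivAt
  have h1 : HasDerivAt (fun t : ℝ => (x, t)) ((0 : ℝ), (1 : ℝ)) y :=
    (hasDerivAt_const y x).prodMk (hasDerivAt_id y)
  exact hd.comp_hasDerivAt y h1

lemma hasDerivAt_fst' {f : ℝ → ℝ × ℝ} {v : ℝ × ℝ} {x : ℝ} (h : HasDerivAt f v x) :
    HasDerivAt (fun t => (f t).1) v.1 x :=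
  (ContinuousLinearMap.fst ℝ ℝ ℝ).hasFDerivAt.comp_hasDerivAt x h

lemma hasDerivAt_snd' {f : ℝ → ℝ × ℝ} {v : ℝ × ℝ} {x : ℝ} (h : HasDerivAt f v x) :
    HasDerivAt (fun t => (f t).2) v.2 x :=
  (ContinuousLinearMap.snd ℝ ℝ ℝ).hasFDerivAt.comp_hasDerivAt x h

lemma surj_of_id {f : ℝ → ℝ} (hf : Continuous f) (h : ∀ y, 1 ≤ |y| → f y = y) :
    Function.Surjective f := by
  intro y
  refine mem_range_of_exists_le_of_exists_ge hf ⟨-(|y| + 1), ?_⟩ ⟨|y| + 1, ?_⟩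
  · rw [h _ (by rw [abs_neg, abs_of_nonneg (by positivity)]; linarith [abs_nonneg y])]
    linarith [neg_abs_le y]
  · rw [h _ (by rw [abs_of_nonneg (by positivity)]; linarith [abs_nonneg y])]
    linarith [le_abs_self y]

lemma surj_of_near {f : ℝ → ℝ} (hf : Continuous f) (C : ℝ) (h : ∀ y, |f y - y| ≤ C) :
    Function.Surjective f := by
  intro y
  refine mem_range_of_exists_le_of_exists_ge hf ⟨y - C, ?_⟩ ⟨y + C, ?_⟩
  · linarith [(abs_le.1 (h (y - C))).2]
  · linarith [(abs_le.1 (h (y + C))).1]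

/-- Area preserving map of the cylinder straightening the graphs of `W (·, Y)`. -/
lemma exists_area_map (W ρ : ℝ × ℝ → ℝ) (hW : ContDiff ℝ ∞ W) (hρc : ContDiff ℝ ∞ ρ)
    (hper : ∀ x Y, W (x + 1, Y) = W (x, Y))
    (hρ : ∀ x Y, HasDerivAt (fun Y => W (x, Y)) (ρ (x, Y)) Y)
    (hpos : ∀ z, 0 < ρ z) (δ : ℝ) (hδ : 0 < δ)
    (hid : ∀ x Y, 1 - δ ≤ |Y| → W (x, Y) = Y ∧ ρ (x, Y) = 1) (N : ℕ) (hN : 1 ≤ N) :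
    ∃ Ht : ℝ × ℝ ≃ ℝ × ℝ,
      ContDiff ℝ ∞ ⇑Ht ∧ ContDiff ℝ ∞ ⇑Ht.symm ∧
      MeasurePreserving Ht volume volume ∧
      (∀ x y : ℝ, Ht (x + 1 / N, y) = Ht (x, y) + ((1 / N : ℝ), (0 : ℝ))) ∧
      (∀ x y : ℝ, 1 - δ ≤ |y| → Ht (x, y) = (x, y)) ∧
      (∀ x y : ℝ, |(Ht (x, y)).1 - x| ≤ 1 / N) ∧
      (∀ x Y : ℝ, (Ht (x, W (N * x, Y))).2 = ∫ t in (0:ℝ)..1, W (t, Y)) := by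
  have hN0 : (0 : ℝ) < N := by exact_mod_cast hN
  have hid1 : ∀ x Y, 1 ≤ |Y| → W (x, Y) = Y := fun x Y h => (hid x Y (by linarith)).1
  -- smoothness along lines
  have hρcont : Continuous ρ := hρc.continuous
  have hρline : ∀ Y, Continuous fun t => ρ (t, Y) := fun Y =>
    hρcont.comp (by fun_prop)
  have hρper : ∀ Y, Function.Periodic (fun t => ρ (t, Y)) 1 := by
    intro Y x
    have h1 := hρ (x + 1) Y
    simp only [hper] at h1
    exact h1.unique (hρ x Y)
  obtain ⟨R, hR⟩ : ∃ R : ℝ → ℝ → ℝ, ∀ x Y, R x Y = ∫ t in (0:ℝ)..x, ρ (t, Y) := ⟨_, fun _ _ => rfl⟩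
  obtain ⟨B, hB⟩ : ∃ B : ℝ → ℝ, ∀ Y, B Y = ∫ t in (0:ℝ)..1, W (t, Y) := ⟨_, fun _ => rfl⟩
  have hRsm : ContDiff ℝ ∞ (fun p : ℝ × ℝ => R p.1 p.2) := by
    have h1 : (fun p : ℝ × ℝ => R p.1 p.2) =
        fun p => p.1 * ∫ u in (0:ℝ)..1, ρ (p.1 * u, p.2) := by
      ext p
      rw [hR]
      have := intervalIntegral.mul_integral_comp_mul_left (a := 0) (b := 1)
        (f := fun t => ρ (t, p.2)) (c := p.1)
      rw [this]; simp
    rw [h1]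
    refine contDiff_fst.mul (contDiff_param (fun q => ρ (q.1.1 * q.2, q.1.2)) ?_)
    exact hρc.comp (by fun_prop)
  have hBsm : ContDiff ℝ ∞ B := by
    have h2 : ContDiff ℝ ∞ (fun p : ℝ × ℝ => ∫ t in (0:ℝ)..1, W (t, p.2)) :=
      contDiff_param (fun q => W (q.2, q.1.2)) (hW.comp (by fun_prop))
    have h3 : B = (fun p : ℝ × ℝ => ∫ t in (0:ℝ)..1, W (t, p.2)) ∘ fun Y => ((0:ℝ), Y) := by
      ext Y; simp [hB]
    rw [h3]; exact h2.comp (by fun_prop)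
  have hRx : ∀ x Y, HasDerivAt (fun x => R x Y) (ρ (x, Y)) x := by
    intro x Y
    simp only [hR]
    exact intervalIntegral.integral_hasDerivAt_right ((hρline Y).intervalIntegrable _ _)
      ((hρline Y).stronglyMeasurableAtFilter _ _) (hρline Y).continuousAt
  have hBd : ∀ Y, HasDerivAt B (R 1 Y) Y := by
    intro Y
    obtain ⟨C, hC⟩ := ((isCompact_Icc (a := (0:ℝ)) (b := 1)).prod (isCompact_closedBall Y 1)).exists_bound_of_continuousOn hρcont.continuousOn
    have hWl : ∀ Y, Continuous fun t => W (t, Y) := fun Y => hW.continuous.comp (by fun_prop)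
    have := (intervalIntegral.hasDerivAt_integral_of_dominated_loc_of_deriv_le (μ := volume) (𝕜 := ℝ)
      (a := 0) (b := 1)
      (F := fun Y t => W (t, Y)) (F' := fun Y t => ρ (t, Y)) (x₀ := Y) (s := Metric.ball Y 1)
      (bound := fun _ => C) (Metric.ball_mem_nhds Y one_pos)
      (Filter.Eventually.of_forall fun y => (hWl y).aestronglyMeasurable)
      ((hWl Y).intervalIntegrable _ _) (hρline Y).aestronglyMeasurable
      (Filter.Eventually.of_forall fun t ht y hy => by
        rw [uIoc_of_le zero_le_one] at ht
        exact hC (t, y) ⟨⟨ht.1.le, ht.2⟩, Metric.ball_subset_closedBall hy⟩)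
      intervalIntegrable_const
      (Filter.Eventually.of_forall fun t ht y hy => hρ t y)).2
    rw [hR]
    rwa [show B = _ from funext hB]
  have hm : ∀ Y, 0 < R 1 Y := by
    intro Y
    rw [hR]
    exact intervalIntegral.intervalIntegral_pos_of_pos ((hρline Y).intervalIntegrable _ _)
      (fun t => hpos _) one_pos
  have hBmono : StrictMono B := strictMono_of_hasDerivAt_pos hBd hm
  have hWmono : ∀ x, StrictMono fun Y => W (x, Y) := fun x =>
    strictMono_of_hasDerivAt_pos (hρ x) (fun _ => hpos _)
  have hRmono : ∀ Y, StrictMono fun x => R x Y := fun Y =>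
    strictMono_of_hasDerivAt_pos (fun x => hRx x Y) (fun _ => hpos _)
  have hBid : ∀ Y, 1 - δ ≤ |Y| → B Y = Y := by
    intro Y h
    rw [hB]; simp [(hid _ Y h).1]
  have hRid : ∀ x Y, 1 - δ ≤ |Y| → R x Y = x := by
    intro x Y h
    rw [hR]; simp [(hid _ Y h).2]
  have hRadd : ∀ x Y, R (x + 1) Y = R x Y + R 1 Y := by
    intro x Y
    simp only [hR]
    rw [← intervalIntegral.integral_add_adjacent_intervals (b := x)
      ((hρline Y).intervalIntegrable _ _) ((hρline Y).intervalIntegrable _ _)]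
    congr 1
    simpa using (hρper Y).intervalIntegral_add_eq x 0
  obtain ⟨A, hA⟩ : ∃ A : ℝ → ℝ → ℝ, ∀ x Y, A x Y = R x Y / R 1 Y := ⟨_, fun _ _ => rfl⟩
  have hAadd : ∀ x Y, A (x + 1) Y = A x Y + 1 := by
    intro x Y
    rw [hA, hA, hRadd, add_div, div_self (hm Y).ne']
  have hAmono : ∀ Y, StrictMono fun x => A x Y := by
    intro Y a b hab
    simp only [hA]
    exact div_lt_div_of_pos_right (hRmono Y hab) (hm Y)
  have hA0 : ∀ Y, A 0 Y = 0 := fun Y => by rw [hA, hR]; simp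
  have hAnear : ∀ Y x, |A x Y - x| ≤ 1 := by
    intro Y x
    have hp : Function.Periodic (fun x => A x Y - x) 1 := fun x => by
      simp only [hAadd]; ring
    have h1 : A x Y - x = A (Int.fract x) Y - Int.fract x := by
      have := hp.sub_int_mul_eq (x := x) ⌊x⌋
      simp only [mul_one] at this
      rw [Int.fract, this]
    have h2 := Int.fract_nonneg x
    have h3 := (Int.fract_lt_one x).le
    have h4 := (hAmono Y).monotone h2
    have h5 := (hAmono Y).monotone h3
    have h6 := hAadd 0 Y
    simp only [hA0, zero_add] at h4 h5 h6
    rw [h1, abs_le]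
    constructor <;> linarith
  have hAsm : ContDiff ℝ ∞ (fun p : ℝ × ℝ => A p.1 p.2) := by
    simp only [hA]
    refine hRsm.div ?_ (fun p => (hm _).ne')
    exact hRsm.comp (by fun_prop : ContDiff ℝ ∞ fun p : ℝ × ℝ => ((1:ℝ), p.2))
  have hAx : ∀ x Y, HasDerivAt (fun x => A x Y) (ρ (x, Y) / R 1 Y) x := by
    intro x Y
    simp only [hA]
    exact (hRx x Y).div_const _
  -- the two maps
  let U0 : ℝ × ℝ → ℝ × ℝ := fun p => (p.1, W (N * p.1, p.2))
  let T0 : ℝ × ℝ → ℝ × ℝ := fun p => (A (N * p.1) p.2 / N, B p.2)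
  have hUsm : ContDiff ℝ ∞ U0 := contDiff_fst.prodMk (hW.comp (by fun_prop))
  have hTsm : ContDiff ℝ ∞ T0 :=
    ((hAsm.comp (by fun_prop : ContDiff ℝ ∞ fun p : ℝ × ℝ => ((N:ℝ) * p.1, p.2))).div_const _).prodMk
      (hBsm.comp contDiff_snd)
  have hUbij : Function.Bijective U0 := by
    constructor
    · rintro ⟨x, y⟩ ⟨x', y'⟩ h
      simp only [U0, Prod.mk.injEq] at h
      obtain ⟨rfl, h⟩ := h
      rw [(hWmono _).injective h]
    · rintro ⟨x, y⟩
      obtain ⟨Y, hY⟩ := surj_of_id (f := fun Y => W (N * x, Y))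
        (hW.continuous.comp (by fun_prop)) (fun Y h => hid1 _ Y h) y
      exact ⟨(x, Y), by simp only [U0]; rw [← hY]⟩
  have hTbij : Function.Bijective T0 := by
    constructor
    · rintro ⟨x, y⟩ ⟨x', y'⟩ h
      simp only [T0, Prod.mk.injEq] at h
      obtain ⟨h, h'⟩ := h
      have := hBmono.injective h'
      subst this
      have h2 : A (N * x) y = A (N * x') y := by
        field_simp at h; exact h
      have h3 := (hAmono y).injective h2
      rw [mul_left_cancel₀ hN0.ne' h3]
    · rintro ⟨x, y⟩
      obtain ⟨Y, rfl⟩ := surj_of_id hBsm.continuous (fun Y h => hBid Y (by linarith)) y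
      obtain ⟨X, hX⟩ := surj_of_near (f := fun x => A x Y)
        (hAsm.continuous.comp (by fun_prop : Continuous fun x : ℝ => (x, Y))) 1 (hAnear Y) (N * x)
      refine ⟨(X / N, Y), ?_⟩
      simp only [T0]
      rw [mul_div_cancel₀ _ hN0.ne', show A X Y = N * x from hX, mul_div_cancel_left₀ _ hN0.ne']
  let U := Equiv.ofBijective U0 hUbij
  let T := Equiv.ofBijective T0 hTbij
  obtain ⟨hUs, hUm⟩ := equiv_jac U hUsm (fun p => ρ (N * p.1, p.2)) (fun _ => hpos _) (by
    rintro ⟨x, Y⟩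
    have h1 := partial_fst U0 hUsm x Y
    have h2 := partial_snd U0 hUsm x Y
    rw [det_prod]
    have e1 : (fderiv ℝ U0 (x, Y) (1, 0)).1 = 1 := (hasDerivAt_fst' h1).unique (hasDerivAt_id x)
    have e2 : (fderiv ℝ U0 (x, Y) (0, 1)).1 = 0 := (hasDerivAt_fst' h2).unique (hasDerivAt_const Y x)
    have e3 : (fderiv ℝ U0 (x, Y) (0, 1)).2 = ρ (N * x, Y) := (hasDerivAt_snd' h2).unique (hρ (N * x) Y)
    change (fderiv ℝ U0 (x, Y) (1, 0)).1 * (fderiv ℝ U0 (x, Y) (0, 1)).2 -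
      (fderiv ℝ U0 (x, Y) (0, 1)).1 * (fderiv ℝ U0 (x, Y) (1, 0)).2 = _
    rw [e1, e2, e3]; ring)
  obtain ⟨hTs, hTm⟩ := equiv_jac T hTsm (fun p => ρ (N * p.1, p.2)) (fun _ => hpos _) (by
    rintro ⟨x, Y⟩
    have h1 := partial_fst T0 hTsm x Y
    have h2 := partial_snd T0 hTsm x Y
    rw [det_prod]
    have e1 : (fderiv ℝ T0 (x, Y) (1, 0)).1 = ρ (N * x, Y) / R 1 Y := by
      refine (hasDerivAt_fst' h1).unique ?_
      have h3 : HasDerivAt (fun t => A (N * t) Y / N) (ρ (N * x, Y) / R 1 Y * (N * 1) / N) x :=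
        ((hAx (N * x) Y).comp x ((hasDerivAt_id x).const_mul (N:ℝ))).div_const (N:ℝ)
      rw [mul_one, mul_div_assoc, div_self hN0.ne', mul_one] at h3
      exact h3
    have e2 : (fderiv ℝ T0 (x, Y) (1, 0)).2 = 0 := (hasDerivAt_snd' h1).unique (hasDerivAt_const x (B Y))
    have e3 : (fderiv ℝ T0 (x, Y) (0, 1)).2 = R 1 Y := (hasDerivAt_snd' h2).unique (hBd Y)
    change (fderiv ℝ T0 (x, Y) (1, 0)).1 * (fderiv ℝ T0 (x, Y) (0, 1)).2 -
      (fderiv ℝ T0 (x, Y) (0, 1)).1 * (fderiv ℝ T0 (x, Y) (1, 0)).2 = _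
    rw [e1, e2, e3]
    have := (hm Y).ne'
    field_simp
    ring)
  have key : ∀ x Y, (U.symm.trans T) (x, W (N * x, Y)) = (A (N * x) Y / N, B Y) := by
    intro x Y
    have : U.symm (x, W (N * x, Y)) = (x, Y) := by
      rw [Equiv.symm_apply_eq]; rfl
    rw [Equiv.trans_apply, this]; rfl
  have hsol : ∀ x y, ∃ Y, W (N * x, Y) = y := fun x y =>
    surj_of_id (f := fun Y => W (N * x, Y))
        (hW.continuous.comp (by fun_prop)) (fun Y h => hid1 _ Y h) y
  refine ⟨U.symm.trans T, hTsm.comp hUs, hUsm.comp hTs, ?_, ?_, ?_, ?_, ?_⟩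
  · refine ⟨(hTsm.comp hUs).continuous.measurable, ?_⟩
    have hUmeas : Measurable U := hUsm.continuous.measurable
    have hUsmeas : Measurable U.symm := hUs.continuous.measurable
    have hTmeas : Measurable T := hTsm.continuous.measurable
    rw [Equiv.coe_trans, ← Measure.map_map hTmeas hUsmeas]
    conv_lhs => rw [← hUm]
    rw [Measure.map_map hUsmeas hUmeas]
    simp only [Equiv.symm_comp_self, Measure.map_id]
    exact hTm
  · intro x y
    obtain ⟨Y, rfl⟩ := hsol x y
    have h1 : (N:ℝ) * (x + 1 / N) = N * x + 1 := by field_simp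
    have h2 : W (N * x, Y) = W (N * (x + 1 / N), Y) := by rw [h1, hper]
    rw [key]
    conv_lhs => rw [h2]
    rw [key, h1, hAadd]
    ext <;> simp [add_div]
  · intro x y h
    have h1 : y = W (N * x, y) := ((hid _ y h).1).symm
    conv_lhs => rw [h1]
    rw [key, hA, hRid _ _ h, hRid _ _ h, hBid _ h]
    ext
    · simp only; field_simp
    · rfl
  · intro x y
    obtain ⟨Y, rfl⟩ := hsol x y
    rw [key]
    have := hAnear Y (N * x)
    have h2 : A (N * x) Y / N - x = (A (N * x) Y - N * x) / N := by field_simp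
    simp only
    rw [h2, abs_div, abs_of_pos hN0]
    gcongr
  · intro x Y
    rw [key, hB]


lemma exists_tau (η : ℝ) (hη : 0 < η) (hη1 : η < 1) :
    ∃ (τ χ : ℝ → ℝ) (c : ℝ), ContDiff ℝ ∞ τ ∧ ContDiff ℝ ∞ χ ∧ (∀ y, HasDerivAt τ (χ y) y) ∧
      (∀ y, 0 ≤ χ y) ∧ (∀ y, χ y < 1) ∧ (∀ y, 1 - η / 8 ≤ |y| → χ y = 0) ∧
      (∀ y, y ≤ -(1 - η / 8) → τ y = 0) ∧ (∀ y, 1 - η / 8 ≤ y → τ y = c) ∧ 2 - η ≤ c ∧ c ≤ 2 := by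
  let b : ContDiffBump (0:ℝ) := ⟨1 - η / 4, 1 - η / 8, by linarith, by linarith⟩
  set k : ℝ := 1 - η / 8 with hk
  have hk0 : 0 < k := by linarith
  let χ : ℝ → ℝ := fun y => k * b y
  have hχ : ContDiff ℝ ∞ χ := contDiff_const.mul b.contDiff
  have hχc : Continuous χ := hχ.continuous
  have hχi : ∀ a c, IntervalIntegrable χ volume a c := fun a c => hχc.intervalIntegrable a c
  have hχ0 : ∀ y, 0 ≤ χ y := fun y => mul_nonneg hk0.le b.nonneg
  have hχk : ∀ y, χ y ≤ k := fun y => by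
    have := b.le_one (x := y)
    simp only [χ]; nlinarith
  have hχz : ∀ y, 1 - η / 8 ≤ |y| → χ y = 0 := fun y hy => by
    simp only [χ]
    rw [b.zero_of_le_dist (by simpa [b] using hy), mul_zero]
  let τ : ℝ → ℝ := fun y => ∫ t in (-1:ℝ)..y, χ t
  have hτd : ∀ y, HasDerivAt τ (χ y) y := fun y =>
    intervalIntegral.integral_hasDerivAt_right (hχi _ _) (hχc.stronglyMeasurableAtFilter _ _)
      hχc.continuousAt
  have hτs : ContDiff ℝ ∞ τ := by
    rw [contDiff_infty_iff_deriv]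
    refine ⟨fun y => (hτd y).differentiableAt, ?_⟩
    rwa [show deriv τ = χ from funext fun y => (hτd y).deriv]
  have hsub : ∀ y z, τ z - τ y = ∫ t in y..z, χ t := fun y z =>
    intervalIntegral.integral_interval_sub_left (hχi _ _) (hχi _ _)
  have hτm1 : τ (-1) = 0 := by simp [τ]
  have hmono : Monotone τ := monotone_of_hasDerivAt_nonneg hτd hχ0
  have hz : ∀ y z, (∀ t ∈ uIcc y z, χ t = 0) → τ z = τ y := by
    intro y z h
    have h1 := hsub y z
    rw [intervalIntegral.integral_congr (g := fun _ => (0:ℝ)) h] at h1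
    simp at h1; linarith
  refine ⟨τ, χ, τ 1, hτs, hχ, hτd, hχ0, fun y => (hχk y).trans_lt (by linarith), hχz, ?_, ?_, ?_, ?_⟩
  · intro y hy
    rw [← hτm1]
    refine hz _ _ fun t ht => hχz t ?_
    have : t ≤ -(1 - η / 8) := ht.2.trans (max_le (by linarith) hy)
    rw [abs_of_nonpos (by linarith)]; linarith
  · intro y hy
    refine hz _ _ fun t ht => hχz t ?_
    have : 1 - η / 8 ≤ t := (le_min (by linarith) hy).trans ht.1
    exact this.trans (le_abs_self _)
  · have h1 : τ (1 - η / 4) - τ (-(1 - η / 4)) = k * (2 * (1 - η / 4)) := by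
      rw [hsub, intervalIntegral.integral_congr (g := fun _ => k)]
      · simp; ring
      · intro t ht
        rw [uIcc_of_le (by linarith)] at ht
        have : b t = 1 := b.one_of_mem_closedBall (by
          simp only [mem_closedBall_zero_iff, Real.norm_eq_abs, b]
          exact abs_le.2 ht)
        simp [χ, this]
    have h2 := hmono (show 1 - η / 4 ≤ 1 by linarith)
    have h3 := hmono (show -1 ≤ -(1 - η / 4) by linarith)
    rw [hτm1] at h3
    nlinarith
  · have h1 : τ 1 ≤ ∫ t in (-1:ℝ)..1, (1:ℝ) :=
      intervalIntegral.integral_mono_on (by norm_num) (hχi _ _) intervalIntegrable_const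
        (fun t _ => (hχk t).trans (by linarith))
    norm_num at h1; linarith

lemma cos_small_sublevel (w : ℝ) (hw : 0 < w) : ∃ κ : ℝ, 0 < κ ∧ κ ≤ 1 / 4 ∧ κ ≤ w ∧ ∀ a : ℝ, |a| ≤ 1 / 4 →
    ∃ S : Set ℝ, MeasurableSet S ∧ volume S ≤ ENNReal.ofReal w ∧
      ∀ t ∈ Icc (0:ℝ) 1, |Real.cos (2 * Real.pi * t) / 4 - a| ≤ κ → t ∈ S := by
  have hpi := Real.pi_gt_three
  have huc := (isCompact_Icc (a := (-2:ℝ)) (b := 2)).uniformContinuousOn_of_continuous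
    (Real.continuous_arccos).continuousOn
  rw [Metric.uniformContinuousOn_iff] at huc
  obtain ⟨d, hd, hd'⟩ := huc w hw
  refine ⟨min (min (1 / 4) w) (d / 16), by positivity, (min_le_left _ _).trans (min_le_left _ _),
    (min_le_left _ _).trans (min_le_right _ _), ?_⟩
  set κ := min (min (1 / 4) w) (d / 16) with hκ
  have hκ0 : 0 < κ := by positivity
  have hκ1 : κ ≤ 1 / 4 := (min_le_left _ _).trans (min_le_left _ _)
  have hκ2 : κ ≤ d / 16 := min_le_right _ _
  intro a ha
  obtain ⟨ha1, ha2⟩ := abs_le.1 ha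
  set l := Real.arccos (4 * a + 4 * κ) with hl
  set u := Real.arccos (4 * a - 4 * κ) with hu
  have hlu : u - l ≤ w := by
    have := hd' (4 * a - 4 * κ) ⟨by linarith, by linarith⟩ (4 * a + 4 * κ) ⟨by linarith, by linarith⟩
      (by rw [Real.dist_eq, abs_lt]; constructor <;> linarith)
    rw [Real.dist_eq] at this
    exact (le_abs_self _).trans this.le
  have hp2 : 0 < 2 * Real.pi := by positivity
  refine ⟨Icc (l / (2 * Real.pi)) (u / (2 * Real.pi)) ∪
    Icc (1 - u / (2 * Real.pi)) (1 - l / (2 * Real.pi)),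
    measurableSet_Icc.union measurableSet_Icc, ?_, ?_⟩
  · have h6 : u / (2 * Real.pi) - l / (2 * Real.pi) ≤ w / 2 := by
      rw [← sub_div, div_le_iff₀ hp2]
      nlinarith
    calc volume _ ≤ volume (Icc (l / (2 * Real.pi)) (u / (2 * Real.pi))) +
          volume (Icc (1 - u / (2 * Real.pi)) (1 - l / (2 * Real.pi))) := measure_union_le _ _
      _ ≤ ENNReal.ofReal (w / 2) + ENNReal.ofReal (w / 2) := by
          rw [Real.volume_Icc, Real.volume_Icc]
          gcongr
          linarith
      _ = ENNReal.ofReal w := by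
          rw [← ENNReal.ofReal_add (by positivity) (by positivity)]; congr 1; ring
  · have main : ∀ t, 0 ≤ t → t ≤ 1 / 2 → |Real.cos (2 * Real.pi * t) / 4 - a| ≤ κ →
        l / (2 * Real.pi) ≤ t ∧ t ≤ u / (2 * Real.pi) := by
      intro t h0 h1 h
      obtain ⟨h2, h3⟩ := abs_le.1 h
      have h4 : Real.arccos (Real.cos (2 * Real.pi * t)) = 2 * Real.pi * t :=
        Real.arccos_cos (by positivity) (by nlinarith)
      rw [div_le_iff₀ hp2, le_div_iff₀ hp2, mul_comm t, ← h4]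
      exact ⟨Real.antitone_arccos (by linarith), Real.antitone_arccos (by linarith)⟩
    rintro t ⟨h0, h1⟩ h
    rcases le_total t (1 / 2) with h2 | h2
    · exact Or.inl (main t h0 h2 h)
    · right
      have h3 : Real.cos (2 * Real.pi * (1 - t)) = Real.cos (2 * Real.pi * t) := by
        rw [show 2 * Real.pi * (1 - t) = 2 * Real.pi - 2 * Real.pi * t by ring, Real.cos_two_pi_sub]
      have := main (1 - t) (by linarith) (by linarith) (by rwa [h3])
      exact ⟨by linarith, by linarith⟩

lemma exists_W (η w : ℝ) (hη : 0 < η) (hη1 : η < 1) (hw : 0 < w) :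
    ∃ W ρ : ℝ × ℝ → ℝ, ContDiff ℝ ∞ W ∧ ContDiff ℝ ∞ ρ ∧
      (∀ x Y, W (x + 1, Y) = W (x, Y)) ∧
      (∀ x Y, HasDerivAt (fun Y => W (x, Y)) (ρ (x, Y)) Y) ∧
      (∀ z, 0 < ρ z) ∧
      (∀ x Y, 1 - η / 16 ≤ |Y| → W (x, Y) = Y ∧ ρ (x, Y) = 1) ∧
      ∀ x, ∃ Y0 Y1, W (x, Y0) ≤ -1 + η ∧ 1 - η ≤ W (x, Y1) ∧
        (∫ t in (0:ℝ)..1, W (t, Y1)) - (∫ t in (0:ℝ)..1, W (t, Y0)) ≤ w := by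
  obtain ⟨τ, χ, c, hτ, hχ, hτd, hχ0, hχ1, hχz, hτl, hτr, hc1, hc2⟩ := exists_tau η hη hη1
  obtain ⟨κ, hκ0, hκ1, hκw, hS⟩ := cos_small_sublevel (w / 3) (by positivity)
  have hc0 : 0 < c := by linarith
  set σ := Real.smoothTransition with hσ
  have hσs : ContDiff ℝ ∞ σ := Real.smoothTransition.contDiff
  have hσd : ∀ y, HasDerivAt σ (deriv σ y) y := fun y =>
    (hσs.differentiable (by simp)).differentiableAt.hasDerivAt
  have hσmono : Monotone σ := Real.smoothTransition.monotone
  have hσd0 : ∀ y, 0 ≤ deriv σ y := fun y => hσmono.deriv_nonneg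
  have hσd' : ContDiff ℝ ∞ (deriv σ) := (contDiff_infty_iff_deriv.1 hσs).2
  let s : ℝ → ℝ := fun x => Real.cos (2 * Real.pi * x) / 4
  have hs : ContDiff ℝ ∞ s := by fun_prop
  have hsb : ∀ x, |s x| ≤ 1 / 4 := fun x => by
    have := Real.abs_cos_le_one (2 * Real.pi * x)
    simp only [s]
    rw [abs_div, abs_of_pos (by norm_num : (0:ℝ) < 4)]
    linarith
  let W : ℝ × ℝ → ℝ := fun p => p.2 - τ p.2 + c * σ ((p.2 - s p.1) / κ)
  let ρ : ℝ × ℝ → ℝ := fun p => 1 - χ p.2 + c * (deriv σ ((p.2 - s p.1) / κ) * (1 / κ))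
  have hWs : ContDiff ℝ ∞ W := by
    refine (contDiff_snd.sub (hτ.comp contDiff_snd)).add (contDiff_const.mul (hσs.comp ?_))
    exact (contDiff_snd.sub (hs.comp contDiff_fst)).div_const _
  have hρd : ∀ x Y, HasDerivAt (fun Y => W (x, Y)) (ρ (x, Y)) Y := by
    intro x Y
    refine ((hasDerivAt_id Y).sub (hτd Y)).add (HasDerivAt.const_mul c ?_)
    exact (hσd _).comp Y (((hasDerivAt_id Y).sub_const (s x)).div_const κ)
  have hσ0 : ∀ {y}, y ≤ 0 → σ y = 0 := fun h => Real.smoothTransition.zero_of_nonpos h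
  have hσ1 : ∀ {y}, 1 ≤ y → σ y = 1 := fun h => Real.smoothTransition.one_of_one_le h
  have hWid : ∀ x Y, 1 - η / 8 ≤ |Y| → W (x, Y) = Y := by
    intro x Y h
    obtain ⟨h1, h2⟩ := abs_le.1 (hsb x)
    rcases le_abs.1 h with h | h
    · have : 1 ≤ (Y - s x) / κ := by rw [le_div_iff₀ hκ0]; linarith
      simp only [W, hσ1 this, hτr Y h]; ring
    · have : (Y - s x) / κ ≤ 0 := div_nonpos_of_nonpos_of_nonneg (by linarith) hκ0.le
      simp only [W, hσ0 this, hτl Y (by linarith)]; ring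
  have hmono' : Monotone fun y => y - τ y :=
    monotone_of_hasDerivAt_nonneg (fun y => (hasDerivAt_id y).sub (hτd y))
      (fun y => by simpa using (hχ1 y).le)
  have hτmono : Monotone τ := monotone_of_hasDerivAt_nonneg hτd hχ0
  refine ⟨W, ρ, hWs, ?_, ?_, hρd, ?_, ?_, ?_⟩
  · refine (contDiff_const.sub (hχ.comp contDiff_snd)).add
      (contDiff_const.mul ((hσd'.comp ?_).mul contDiff_const))
    exact (contDiff_snd.sub (hs.comp contDiff_fst)).div_const _
  · intro x Y
    have : s (x + 1) = s x := by
      simp only [s]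
      rw [mul_add, mul_one, Real.cos_add_two_pi]
    simp only [W, this]
  · intro z
    have h1 := hχ1 z.2
    have h2 := hσd0 ((z.2 - s z.1) / κ)
    have : 0 ≤ c * (deriv σ ((z.2 - s z.1) / κ) * (1 / κ)) := by positivity
    simp only [ρ]; linarith
  · intro x Y h
    refine ⟨hWid x Y (by linarith), (hρd x Y).unique ?_⟩
    refine (hasDerivAt_id Y).congr_of_eventuallyEq ?_
    have : ∀ᶠ y in 𝓝 Y, 1 - η / 8 < |y| :=
      continuous_abs.continuousAt.eventually (lt_mem_nhds (by linarith))
    filter_upwards [this] with y hy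
    exact hWid x y hy.le
  · intro x
    obtain ⟨h1, h2⟩ := abs_le.1 (hsb x)
    refine ⟨s x, s x + κ, ?_, ?_, ?_⟩
    · have := hmono' (show s x ≤ 1 by linarith)
      simp only [hτr 1 (by linarith)] at this
      simp only [W, hσ0 (show (s x - s x) / κ ≤ 0 by simp)]
      linarith
    · have := hmono' (show -1 ≤ s x + κ by linarith)
      simp only [hτl (-1) (by linarith)] at this
      simp only [W, hσ1 (show 1 ≤ (s x + κ - s x) / κ by
        rw [add_sub_cancel_left, div_self hκ0.ne'])]
      linarith
    · obtain ⟨S, hSm, hSv, hSt⟩ := hS (s x) (hsb x)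
      have hWc : ∀ Y, IntervalIntegrable (fun t => W (t, Y)) volume 0 1 := fun Y =>
        (hWs.continuous.comp (by fun_prop : Continuous fun t : ℝ => (t, Y))).intervalIntegrable _ _
      have hSr : volume.real (S ∩ Ioc 0 1) ≤ w / 3 := by
        refine ENNReal.toReal_le_of_le_ofReal (by positivity) ?_
        exact (measure_mono inter_subset_left).trans hSv
      rw [← intervalIntegral.integral_sub (hWc _) (hWc _), intervalIntegral.integral_of_le zero_le_one]
      have hind : IntegrableOn (S.indicator fun _ => (2:ℝ)) (Ioc 0 1) volume :=
        (integrable_const (2:ℝ)).indicator hSm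
      have hle : ∫ t in Ioc (0:ℝ) 1, (W (t, s x + κ) - W (t, s x)) ≤
          ∫ t in Ioc (0:ℝ) 1, (κ + S.indicator (fun _ => (2:ℝ)) t) := by
        refine setIntegral_mono_on ?_ ((integrable_const κ).add hind) measurableSet_Ioc ?_
        · exact (((hWc _).sub (hWc _)).1)
        · intro t ht
          have hτ' := hτmono (show s x ≤ s x + κ by linarith)
          have hk : (s x + κ - s t) / κ = (s x - s t) / κ + 1 := by field_simp; ring
          simp only [W]
          by_cases htS : t ∈ S
          · rw [indicator_of_mem htS]
            have h5 : σ ((s x + κ - s t) / κ) ≤ 1 := Real.smoothTransition.le_one _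
            have h6 : 0 ≤ σ ((s x - s t) / κ) := Real.smoothTransition.nonneg _
            nlinarith
          · rw [indicator_of_notMem htS]
            have h7 : κ < |s t - s x| := by
              by_contra hcon
              exact htS (hSt t ⟨ht.1.le, ht.2⟩ (not_lt.1 hcon))
            have h8 : σ ((s x + κ - s t) / κ) = σ ((s x - s t) / κ) := by
              rcases lt_abs.1 h7 with h | h
              · rw [hσ0, hσ0]
                · exact div_nonpos_of_nonpos_of_nonneg (by linarith) hκ0.le
                · exact div_nonpos_of_nonpos_of_nonneg (by linarith) hκ0.le
              · rw [hσ1, hσ1]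
                · rw [le_div_iff₀ hκ0]; linarith
                · rw [le_div_iff₀ hκ0]; linarith
            rw [h8]; linarith
      refine hle.trans ?_
      rw [integral_add (integrable_const κ) hind, integral_indicator_const _ hSm]
      simp only [integral_const, measureReal_restrict_apply MeasurableSet.univ,
        measureReal_restrict_apply hSm]
      simp
      linarith


lemma exists_compress (η w : ℝ) (hη : 0 < η) (hη1 : η < 1) (hw : 0 < w) (N : ℕ) (hN : 1 ≤ N) :
    ∃ Ht : ℝ × ℝ ≃ ℝ × ℝ,
      ContDiff ℝ ∞ ⇑Ht ∧ ContDiff ℝ ∞ ⇑Ht.symm ∧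
      MeasurePreserving Ht volume volume ∧
      (∀ x y : ℝ, Ht (x + 1 / N, y) = Ht (x, y) + ((1 / N : ℝ), (0 : ℝ))) ∧
      (∀ x y : ℝ, 1 - η / 16 ≤ |y| → Ht (x, y) = (x, y)) ∧
      (∀ x y : ℝ, |(Ht (x, y)).1 - x| ≤ 1 / N) ∧
      (∀ x, ∀ y ∈ Icc (-1 + η) (1 - η), ∀ y' ∈ Icc (-1 + η) (1 - η),
        |(Ht (x, y)).2 - (Ht (x, y')).2| ≤ w) := by
  obtain ⟨W, ρ, hW, hρc, hper, hρ, hpos, hid, hY⟩ := exists_W η w hη hη1 hw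
  obtain ⟨Ht, h1, h2, h3, h4, h5, h6, h7⟩ :=
    exists_area_map W ρ hW hρc hper hρ hpos (η / 16) (by positivity) hid N hN
  refine ⟨Ht, h1, h2, h3, h4, h5, h6, ?_⟩
  have hWmono : ∀ x, StrictMono fun Y => W (x, Y) := fun x =>
    strictMono_of_hasDerivAt_pos (hρ x) (fun _ => hpos _)
  have hWl : ∀ Y, Continuous fun t => W (t, Y) := fun Y => hW.continuous.comp (by fun_prop)
  have hBmono : Monotone fun Y => ∫ t in (0:ℝ)..1, W (t, Y) := fun a b hab =>
    intervalIntegral.integral_mono_on zero_le_one ((hWl a).intervalIntegrable _ _)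
      ((hWl b).intervalIntegrable _ _) (fun t _ => (hWmono t).monotone hab)
  have hsol : ∀ x y, ∃ Y, W (N * x, Y) = y := fun x y =>
    surj_of_id (f := fun Y => W (N * x, Y))
        (hW.continuous.comp (by fun_prop)) (fun Y h => (hid _ Y (by linarith)).1) y
  intro x y hy y' hy'
  obtain ⟨Y0, Y1, hY0, hY1, hYw⟩ := hY (N * x)
  have key : ∀ y ∈ Icc (-1 + η) (1 - η), (∫ t in (0:ℝ)..1, W (t, Y0)) ≤ (Ht (x, y)).2 ∧
      (Ht (x, y)).2 ≤ ∫ t in (0:ℝ)..1, W (t, Y1) := by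
    intro y hy
    obtain ⟨Y, rfl⟩ := hsol x y
    rw [h7]
    exact ⟨hBmono ((hWmono _).le_iff_le.1 (hY0.trans hy.1)),
      hBmono ((hWmono _).le_iff_le.1 (hy.2.trans hY1))⟩
  have ha := key y hy
  have hb := key y' hy'
  rw [abs_le]
  constructor <;> linarith

lemma euclDist_le (a b : ℝ × ℝ) : euclDist a b ≤ |a.1 - b.1| + |a.2 - b.2| := by
  unfold euclDist
  refine Real.sqrt_le_iff.2 ⟨by positivity, ?_⟩
  have h1 := sq_abs (a.1 - b.1)
  have h2 := sq_abs (a.2 - b.2)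
  nlinarith [abs_nonneg (a.1 - b.1), abs_nonneg (a.2 - b.2),
    mul_nonneg (abs_nonneg (a.1 - b.1)) (abs_nonneg (a.2 - b.2))]

lemma shift_int (H : ℝ × ℝ → ℝ × ℝ) (c : ℝ)
    (hper : ∀ x y : ℝ, H (x + c, y) = H (x, y) + (c, (0 : ℝ))) (n : ℤ) (x y : ℝ) :
    H (x + n * c, y) = H (x, y) + (n * c, (0 : ℝ)) := by
  have hp : Function.Periodic (fun x => H (x, y) - (x, (0:ℝ))) c := by
    intro x
    simp only [hper]
    ext <;> simp
  have := hp.int_mul n x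
  simp only [sub_eq_iff_eq_add] at this
  rw [this]
  ext
  · simp only [Prod.fst_add, Prod.fst_sub]; ring
  · simp

lemma unif_H (H : ℝ × ℝ → ℝ × ℝ) (hc : Continuous H)
    (hper : ∀ x y : ℝ, H (x + 1, y) = H (x, y) + ((1 : ℝ), (0 : ℝ))) (e : ℝ) (he : 0 < e) :
    ∃ d > 0, ∀ a b : ℝ × ℝ, |a.2| ≤ 1 → |b.2| ≤ 1 → |a.1 - b.1| < d → |a.2 - b.2| < d →
      euclDist (H a) (H b) ≤ e := by
  have huc := ((isCompact_Icc (a := (-1:ℝ)) (b := 2)).prod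
    (isCompact_Icc (a := (-1:ℝ)) (b := 1))).uniformContinuousOn_of_continuous hc.continuousOn
  rw [Metric.uniformContinuousOn_iff] at huc
  obtain ⟨d, hd, hd'⟩ := huc (e / 2) (by positivity)
  refine ⟨min d 1, by positivity, ?_⟩
  rintro ⟨a1, a2⟩ ⟨b1, b2⟩ ha hb h1 h2
  simp only at ha hb h1 h2
  have hs := fun x y => shift_int H 1 hper ⌊a1⌋ x y
  simp only [mul_one] at hs
  have f1 := Int.fract_nonneg a1
  have f2 := Int.fract_lt_one a1
  have f3 := Int.self_sub_floor a1
  have h3 := abs_lt.1 (h1.trans_le (min_le_right _ _))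
  have ea := hs (a1 - ⌊a1⌋) a2
  have eb := hs (b1 - ⌊a1⌋) b2
  rw [sub_add_cancel] at ea eb
  have := hd' (a1 - ⌊a1⌋, a2) ⟨⟨by simp only; linarith, by simp only; linarith⟩, abs_le.1 ha⟩
    (b1 - ⌊a1⌋, b2) ⟨⟨by simp only; linarith, by simp only; linarith⟩, abs_le.1 hb⟩ (by
      rw [Prod.dist_eq, Real.dist_eq, Real.dist_eq]
      refine max_lt ?_ (h2.trans_le (min_le_left _ _))
      simp only [sub_sub_sub_cancel_right]
      exact h1.trans_le (min_le_left _ _))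
  rw [Prod.dist_eq, Real.dist_eq, Real.dist_eq] at this
  refine (euclDist_le _ _).trans ?_
  rw [ea, eb]
  simp only [Prod.fst_add, Prod.snd_add, add_sub_add_right_eq_sub]
  have t1 := (le_max_left _ _).trans this.le
  have t2 := (le_max_right _ _).trans this.le
  linarith

lemma fund_dom : IsAddFundamentalDomain (AddSubgroup.zmultiples ((1:ℝ), (0:ℝ)))
    (Ioc (0:ℝ) 1 ×ˢ (univ : Set ℝ)) volume := by
  refine IsAddFundamentalDomain.mk' (measurableSet_Ioc.prod MeasurableSet.univ).nullMeasurableSet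
    fun x => ?_
  obtain ⟨n, hn, hu⟩ := existsUnique_add_zsmul_mem_Ioc one_pos x.1 0
  refine ⟨⟨n • ((1:ℝ), (0:ℝ)), AddSubgroup.zsmul_mem_zmultiples _ _⟩, ?_, ?_⟩
  · simp only [zero_add] at hn
    simpa [AddSubgroup.vadd_def, add_comm] using hn
  · rintro ⟨_, m, rfl⟩ hm
    have : m = n := hu m (by simpa [AddSubgroup.vadd_def, add_comm] using hm)
    subst this
    rfl

lemma strip_int (g : ℝ × ℝ → ℝ) (hg : Continuous g) :
    ∫ z in Ioc (0:ℝ) 1 ×ˢ Ioc (-1:ℝ) 1, g z = ∫ s in (-1:ℝ)..1, ∫ t in (0:ℝ)..1, g (t, s) := by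
  have hi : IntegrableOn g (Ioc (0:ℝ) 1 ×ˢ Ioc (-1:ℝ) 1) volume :=
    (hg.continuousOn.integrableOn_compact
      ((isCompact_Icc (a := (0:ℝ)) (b := 1)).prod (isCompact_Icc (a := (-1:ℝ)) (b := 1)))).mono_set
      (prod_mono Ioc_subset_Icc_self Ioc_subset_Icc_self)
  rw [IntegrableOn, Measure.volume_eq_prod, ← Measure.prod_restrict] at hi
  rw [Measure.volume_eq_prod, ← Measure.prod_restrict, integral_prod_symm _ hi,
    intervalIntegral.integral_of_le (by norm_num)]
  simp only [intervalIntegral.integral_of_le zero_le_one]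

lemma strip_invariant (K : ℝ × ℝ → ℝ × ℝ) (hKc : Continuous K) (hKi : Function.Injective K)
    (hKm : MeasurePreserving K volume volume)
    (hper : ∀ x y : ℝ, K (x + 1, y) = K (x, y) + ((1 : ℝ), (0 : ℝ)))
    (hid : ∀ x y : ℝ, 1 ≤ |y| → K (x, y) = (x, y))
    (φ : ℝ × ℝ → ℝ) (hφ : Continuous φ) (hφp : ∀ x s : ℝ, φ (x + 1, s) = φ (x, s)) :
    ∫ s in (-1:ℝ)..1, ∫ t in (0:ℝ)..1, φ (K (t, s)) =
      ∫ s in (-1:ℝ)..1, ∫ t in (0:ℝ)..1, φ (t, s) := by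
  rw [← strip_int (fun z => φ (K z)) (hφ.comp hKc), ← strip_int φ hφ]
  have hS : ∀ z, (K z).2 ∈ Ioc (-1:ℝ) 1 ↔ z.2 ∈ Ioc (-1:ℝ) 1 := by
    have h1 : ∀ z : ℝ × ℝ, z.2 ∉ Ioc (-1:ℝ) 1 → K z = z := by
      rintro ⟨x, y⟩ h
      refine hid x y ?_
      by_contra hc
      have := abs_lt.1 (not_le.1 hc)
      exact h ⟨this.1, this.2.le⟩
    intro z
    by_cases hz : z.2 ∈ Ioc (-1:ℝ) 1
    · refine ⟨fun _ => hz, fun _ => ?_⟩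
      by_contra hc
      rw [hKi (h1 _ hc)] at hc
      exact hc hz
    · rw [h1 z hz]
  have hshift := fun n x y => shift_int K 1 hper n x y
  have hφn : ∀ (n : ℤ) x s, φ (x + n, s) = φ (x, s) := by
    intro n x s
    have hp : Function.Periodic (fun x => φ (x, s)) 1 := fun x => hφp x s
    simpa using hp.int_mul n x
  simp only [mul_one] at hshift
  let f : ℝ × ℝ → ℝ := (univ ×ˢ Ioc (-1:ℝ) 1).indicator φ
  have hSm : MeasurableSet ((univ : Set ℝ) ×ˢ Ioc (-1:ℝ) 1) := MeasurableSet.univ.prod measurableSet_Ioc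
  have hset : (Ioc (0:ℝ) 1 ×ˢ (univ : Set ℝ)) ∩ (univ ×ˢ Ioc (-1:ℝ) 1) = Ioc (0:ℝ) 1 ×ˢ Ioc (-1:ℝ) 1 := by
    ext z; simp
  have e1 : ∫ z in Ioc (0:ℝ) 1 ×ˢ (univ : Set ℝ), f z = ∫ z in Ioc (0:ℝ) 1 ×ˢ Ioc (-1:ℝ) 1, φ z := by
    rw [setIntegral_indicator hSm, hset]
  have hfK : (fun z => f (K z)) = (univ ×ˢ Ioc (-1:ℝ) 1).indicator (fun z => φ (K z)) := by
    ext z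
    by_cases hz : z.2 ∈ Ioc (-1:ℝ) 1
    · rw [indicator_of_mem (by exact ⟨mem_univ _, hz⟩)]
      exact indicator_of_mem (by exact ⟨mem_univ _, (hS z).2 hz⟩) _
    · rw [indicator_of_notMem (fun h => hz h.2)]
      exact indicator_of_notMem (fun h => hz ((hS z).1 h.2)) _
  have e2 : ∫ z in Ioc (0:ℝ) 1 ×ˢ (univ : Set ℝ), f (K z) =
      ∫ z in Ioc (0:ℝ) 1 ×ˢ Ioc (-1:ℝ) 1, φ (K z) := by
    rw [hfK, setIntegral_indicator hSm, hset]
  rw [← e1, ← e2]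
  have hfinv : ∀ (n : ℤ) x s, f (x + n, s) = f (x, s) := by
    intro n x s
    simp only [f, indicator, mem_prod, mem_univ, true_and, hφn]
  have hdom' := fund_dom.preimage_of_equiv (f := K) hKm.quasiMeasurePreserving
    (e := id) Function.bijective_id (by
      rintro ⟨_, n, rfl⟩ ⟨x, y⟩
      have := hshift n x y
      simp [AddSubgroup.vadd_def, add_comm] at this ⊢
      rw [this])
  rw [← hKm.setIntegral_preimage_emb (hKc.measurableEmbedding hKi) f]
  refine IsAddFundamentalDomain.setIntegral_eq fund_dom hdom' ?_
  rintro ⟨_, n, rfl⟩ ⟨x, y⟩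
  have h1 := hshift n x y
  have h2 := hfinv n (K (x, y)).1 (K (x, y)).2
  have h3 : ((⟨n • ((1:ℝ), (0:ℝ)), n, rfl⟩ : AddSubgroup.zmultiples ((1:ℝ), (0:ℝ))) +ᵥ (x, y)) =
      (x + n, y) := by
    simp [AddSubgroup.vadd_def, add_comm]
  change f (K ((⟨n • ((1:ℝ), (0:ℝ)), n, rfl⟩ : AddSubgroup.zmultiples ((1:ℝ), (0:ℝ))) +ᵥ (x, y))) = _
  rw [h3, h1, ← h2]
  congr 1
  ext <;> simp

lemma main_aux
    (H : ℝ × ℝ ≃ₜ ℝ × ℝ)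
    (hHvol : MeasurePreserving H volume volume)
    (hHper : ∀ x y : ℝ, H (x + 1, y) = H (x, y) + ((1 : ℝ), (0 : ℝ)))
    (hHid : ∀ x y : ℝ, 1 ≤ |y| → H (x, y) = (x, y))
    (ε : ℝ) (hε : 0 < ε) (q : ℕ) (hq : 1 ≤ q) :
    ∃ Ht : ℝ × ℝ ≃ ℝ × ℝ,
      ContDiff ℝ ∞ ⇑Ht ∧ ContDiff ℝ ∞ ⇑Ht.symm ∧
      MeasurePreserving Ht volume volume ∧
      (∀ x y : ℝ, Ht (x + 1 / q, y) = Ht (x, y) + ((1 / q : ℝ), (0 : ℝ))) ∧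
      (∃ δ > 0, ∀ x y : ℝ, 1 - δ ≤ |y| → Ht (x, y) = (x, y)) ∧
      ∀ y ∈ Set.Icc (-1 + ε / 8) (1 - ε / 8), ∀ φ : ℝ × ℝ → ℝ,
        (∀ a b : ℝ × ℝ, |φ a - φ b| ≤ euclDist a b) →
        (∀ x s : ℝ, φ (x + 1, s) = φ (x, s)) →
        |(∫ t in (0 : ℝ)..1, φ (H (Ht (t, y)))) -
            (1 / 2) * ∫ s in (-1 : ℝ)..1, ∫ t in (0 : ℝ)..1, φ (t, s)| ≤ ε / 8 := by
  obtain ⟨d, hd, hHd⟩ := unif_H H H.continuous hHper (ε / 16) (by positivity)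
  set η := min (ε / 48) (1 / 2) with hη
  have hη0 : 0 < η := by positivity
  have hη1 : η ≤ ε / 48 := min_le_left _ _
  have hη2 : η ≤ 1 / 2 := min_le_right _ _
  obtain ⟨M, hM⟩ := exists_nat_gt (2 / d)
  have hM0 : (0:ℝ) < M := lt_trans (by positivity) hM
  have hM1 : 1 ≤ M := by exact_mod_cast hM0
  have hq0 : (1:ℝ) ≤ q := by exact_mod_cast hq
  have hN1 : 1 ≤ q * M := Nat.one_le_iff_ne_zero.2 (by positivity)
  obtain ⟨Ht, h1, h2, h3, h4, h5, h6, h7⟩ :=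
    exists_compress η (d / 2) hη0 (by linarith) (by positivity) (q * M) hN1
  have hNd : 1 / ((q * M : ℕ) : ℝ) < d / 2 := by
    push_cast
    rw [div_lt_iff₀ (by positivity)]
    rw [div_lt_iff₀ hd] at hM
    nlinarith
  have hqper : ∀ x y : ℝ, Ht (x + 1 / q, y) = Ht (x, y) + ((1 / q : ℝ), (0 : ℝ)) := by
    intro x y
    have := shift_int Ht _ h4 M x y
    have e : ((M : ℤ) : ℝ) * (1 / ((q * M : ℕ) : ℝ)) = 1 / q := by
      push_cast; field_simp
    rwa [e] at this
  have h1per : ∀ x y : ℝ, Ht (x + 1, y) = Ht (x, y) + ((1 : ℝ), (0 : ℝ)) := by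
    intro x y
    have := shift_int Ht _ hqper q x y
    have e : ((q : ℤ) : ℝ) * (1 / (q : ℝ)) = 1 := by
      push_cast; field_simp
    rwa [e] at this
  have hHtid : ∀ x y : ℝ, 1 ≤ |y| → Ht (x, y) = (x, y) := fun x y h => h5 x y (by linarith)
  refine ⟨Ht, h1, h2, h3, hqper, ⟨η / 16, by positivity, h5⟩, ?_⟩
  -- the composition
  let K : ℝ × ℝ → ℝ × ℝ := fun z => H (Ht z)
  have hKc : Continuous K := H.continuous.comp h1.continuous
  have hstrip : ∀ (f : ℝ × ℝ → ℝ × ℝ), Function.Injective f →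
      (∀ x y : ℝ, 1 ≤ |y| → f (x, y) = (x, y)) → ∀ x y, |y| ≤ 1 → |(f (x, y)).2| ≤ 1 := by
    intro f hf hid x y hy
    by_contra hc
    have h := hid (f (x, y)).1 (f (x, y)).2 (not_le.1 hc).le
    have h' := hf h
    have h'' : (f (x, y)).2 = y := congrArg Prod.snd h'
    rw [h''] at hc
    exact hc hy
  have hKi : Function.Injective K := H.injective.comp Ht.injective
  have hKid : ∀ x y : ℝ, 1 ≤ |y| → K (x, y) = (x, y) := fun x y h => by
    simp only [K]; rw [hHtid x y h, hHid x y h]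
  have hKper : ∀ x y : ℝ, K (x + 1, y) = K (x, y) + ((1 : ℝ), (0 : ℝ)) := fun x y => by
    simp only [K]
    rw [h1per, ← hHper]
    congr 1
    ext <;> simp
  intro y hy φ hφ hφp
  have hφc : Continuous φ := by
    refine (LipschitzWith.of_dist_le_mul (K := 2) fun a b => ?_).continuous
    rw [Real.dist_eq]
    refine (hφ a b).trans ((euclDist_le a b).trans ?_)
    rw [Prod.dist_eq, Real.dist_eq, Real.dist_eq]
    have t1 := le_max_left |a.1 - b.1| |a.2 - b.2|
    have t2 := le_max_right |a.1 - b.1| |a.2 - b.2|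
    push_cast
    linarith
  have hφn : ∀ (n : ℤ) x s, φ (x + n, s) = φ (x, s) := by
    intro n x s
    have hp : Function.Periodic (fun x => φ (x, s)) 1 := fun x => hφp x s
    simpa using hp.int_mul n x
  have hosc : ∀ a b : ℝ × ℝ, |a.2| ≤ 1 → |b.2| ≤ 1 → |φ a - φ b| ≤ 3 := by
    rintro ⟨a1, a2⟩ ⟨b1, b2⟩ ha hb
    simp only at ha hb
    have e := hφn (round (a1 - b1)) (a1 - round (a1 - b1)) a2
    rw [sub_add_cancel] at e
    rw [e]
    refine (hφ _ _).trans ((euclDist_le _ _).trans ?_)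
    have t1 := abs_sub_round (a1 - b1)
    have t2 : |a1 - ↑(round (a1 - b1)) - b1| ≤ 1 / 2 := by
      rwa [show a1 - ↑(round (a1 - b1)) - b1 = a1 - b1 - round (a1 - b1) by ring]
    have t3 : |a2 - b2| ≤ 2 := by
      have := abs_le.1 ha
      have := abs_le.1 hb
      rw [abs_le]; constructor <;> linarith
    simp only
    linarith
  obtain ⟨I, hI⟩ : ∃ I : ℝ → ℝ, ∀ s, I s = ∫ t in (0:ℝ)..1, φ (K (t, s)) := ⟨_, fun _ => rfl⟩
  have hline : ∀ s, IntervalIntegrable (fun t => φ (K (t, s))) volume 0 1 := fun s =>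
    ((hφc.comp hKc).comp (by fun_prop : Continuous fun t : ℝ => (t, s))).intervalIntegrable _ _
  have hIc : Continuous I := by
    rw [show I = _ from funext hI]
    refine intervalIntegral.continuous_parametric_intervalIntegral_of_continuous' ?_ 0 1
    exact (hφc.comp hKc).comp (by fun_prop : Continuous fun p : ℝ × ℝ => (p.2, p.1))
  have hdiff : ∀ (C s s' : ℝ), (∀ t, |φ (K (t, s)) - φ (K (t, s'))| ≤ C) → |I s - I s'| ≤ C := by
    intro C s s' h
    rw [hI, hI, ← intervalIntegral.integral_sub (hline s) (hline s')]
    have := intervalIntegral.norm_integral_le_of_norm_le_const (a := 0) (b := 1) (C := C)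
      (f := fun t => φ (K (t, s)) - φ (K (t, s'))) (fun t _ => h t)
    simpa using this
  have hHt1 := hstrip Ht Ht.injective hHtid
  have hK1 := hstrip K hKi hKid
  have hbig : ∀ s s', |s| ≤ 1 → |s'| ≤ 1 → |I s - I s'| ≤ 3 := fun s s' hs hs' =>
    hdiff 3 s s' fun t => hosc _ _ (hK1 t s hs) (hK1 t s' hs')
  have hcore : ∀ s ∈ Icc (-1 + η) (1 - η), ∀ s' ∈ Icc (-1 + η) (1 - η), |I s - I s'| ≤ ε / 16 := by
    intro s hs s' hs'
    refine hdiff _ s s' fun t => (hφ _ _).trans ?_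
    have as : |s| ≤ 1 := abs_le.2 ⟨by linarith [hs.1], by linarith [hs.2]⟩
    have as' : |s'| ≤ 1 := abs_le.2 ⟨by linarith [hs'.1], by linarith [hs'.2]⟩
    refine hHd _ _ (hHt1 t s as) (hHt1 t s' as') ?_ ((h7 t s hs s' hs').trans_lt (by linarith))
    have u1 := abs_le.1 (h6 t s)
    have u2 := abs_le.1 (h6 t s')
    rw [abs_lt]; constructor <;> linarith
  have hinv := strip_invariant K hKc hKi (hHvol.comp h3) hKper hKid φ hφc hφp
  rw [← hinv]
  simp only [← hI]
  change |(∫ t in (0:ℝ)..1, φ (K (t, y))) - _| ≤ _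
  rw [← hI]
  have hycore : y ∈ Icc (-1 + η) (1 - η) := ⟨by linarith [hy.1], by linarith [hy.2]⟩
  have ay : |y| ≤ 1 := abs_le.2 ⟨by linarith [hycore.1], by linarith [hycore.2]⟩
  have hii : ∀ a b, IntervalIntegrable (fun s => I y - I s) volume a b := fun a b =>
    (continuous_const.sub hIc).intervalIntegrable a b
  have hsplit : I y - 1 / 2 * ∫ s in (-1:ℝ)..1, I s = 1 / 2 * ∫ s in (-1:ℝ)..1, (I y - I s) := by
    rw [intervalIntegral.integral_sub intervalIntegrable_const (hIc.intervalIntegrable _ _)]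
    simp; ring
  rw [hsplit, ← intervalIntegral.integral_add_adjacent_intervals (hii (-1) (-1 + η)) (hii (-1 + η) 1),
    ← intervalIntegral.integral_add_adjacent_intervals (hii (-1 + η) (1 - η)) (hii (1 - η) 1)]
  have b1 : |∫ s in (-1:ℝ)..(-1 + η), (I y - I s)| ≤ 3 * η := by
    have := intervalIntegral.norm_integral_le_of_norm_le_const (a := -1) (b := -1 + η) (C := 3)
      (f := fun s => I y - I s) (fun s hs => by
        rw [uIoc_of_le (by linarith)] at hs
        exact hbig y s ay (abs_le.2 ⟨hs.1.le, by linarith [hs.2]⟩))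
    rwa [show -1 + η - -1 = η by ring, abs_of_pos hη0] at this
  have b3 : |∫ s in (1 - η)..1, (I y - I s)| ≤ 3 * η := by
    have := intervalIntegral.norm_integral_le_of_norm_le_const (a := 1 - η) (b := 1) (C := 3)
      (f := fun s => I y - I s) (fun s hs => by
        rw [uIoc_of_le (by linarith)] at hs
        exact hbig y s ay (abs_le.2 ⟨by linarith [hs.1], hs.2⟩))
    rwa [show 1 - (1 - η) = η by ring, abs_of_pos hη0] at this
  have b2 : |∫ s in (-1 + η)..(1 - η), (I y - I s)| ≤ ε / 16 * (2 - 2 * η) := by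
    have := intervalIntegral.norm_integral_le_of_norm_le_const (a := -1 + η) (b := 1 - η) (C := ε / 16)
      (f := fun s => I y - I s) (fun s hs => by
        rw [uIoc_of_le (by linarith)] at hs
        exact hcore y hycore s ⟨hs.1.le, hs.2⟩)
    rwa [show 1 - η - (-1 + η) = 2 - 2 * η by ring, abs_of_nonneg (by linarith)] at this
  obtain ⟨b1l, b1r⟩ := abs_le.1 b1
  obtain ⟨b2l, b2r⟩ := abs_le.1 b2
  obtain ⟨b3l, b3r⟩ := abs_le.1 b3
  have hp : 0 < ε * η := by positivity
  rw [abs_le]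
  constructor <;> nlinarith


end EquiHelpers

/-- **The key construction step in Proposition 3.2.** Let `H` be (the lift of) an area-preserving
homeomorphism of the cylinder equal to the identity on the boundary. For every `ε > 0` and
`q ≥ 1`, there is a `C^∞`, Lebesgue measure-preserving diffeomorphism `H̃` commuting with
translation by `(1/q, 0)` and equal to the identity near the boundary, such that the composition
`Ĥ = H ∘ H̃` sends the uniform measure of every horizontal circle at height
`y ∈ [−1+ε/8, 1−ε/8]` to a measure `ε/8`-close to the normalized area measure of the cylinder
in the Kantorovich distance (tested on 1-periodic 1-Lipschitz functions). -/
theorem compose_with_equidistribution_map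
    (H : ℝ × ℝ ≃ₜ ℝ × ℝ)
    (hHvol : MeasurePreserving H volume volume)
    (hHper : ∀ x y : ℝ, H (x + 1, y) = H (x, y) + ((1 : ℝ), (0 : ℝ)))
    (hHid : ∀ x y : ℝ, 1 ≤ |y| → H (x, y) = (x, y))
    (ε : ℝ) (hε : 0 < ε) (q : ℕ) (hq : 1 ≤ q) :
    ∃ Ht : ℝ × ℝ ≃ ℝ × ℝ,
      ContDiff ℝ (⊤ : ℕ∞) ⇑Ht ∧ ContDiff ℝ (⊤ : ℕ∞) ⇑Ht.symm ∧
      MeasurePreserving Ht volume volume ∧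
      (∀ x y : ℝ, Ht (x + 1 / q, y) = Ht (x, y) + ((1 / q : ℝ), (0 : ℝ))) ∧
      (∃ δ > 0, ∀ x y : ℝ, 1 - δ ≤ |y| → Ht (x, y) = (x, y)) ∧
      ∀ y ∈ Set.Icc (-1 + ε / 8) (1 - ε / 8), ∀ φ : ℝ × ℝ → ℝ,
        (∀ a b : ℝ × ℝ, |φ a - φ b| ≤ euclDist a b) →
        (∀ x s : ℝ, φ (x + 1, s) = φ (x, s)) →
        |(∫ t in (0 : ℝ)..1, φ (H (Ht (t, y)))) -
            (1 / 2) * ∫ s in (-1 : ℝ)..1, ∫ t in (0 : ℝ)..1, φ (t, s)| ≤ ε / 8 := by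
  exact main_aux H hHvol hHper hHid ε hε q hq
end
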